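/- arXiv:2409.04506 — 5 statements merged into one kernel-verified Lean document; each statement's English description precedes it below -/
import Mathlib

section
/- The concave envelope U_c of a utility function U is real-valued (finite) and continuous on (0,∞) and satisfies the growth condition lim_{x→∞} U_c(x)/x = 0. -/
/-!
Sublinear growth together with monotonicity gives, for every slope `ε > 0`, a constant `C` such
that the affine function `z ↦ ε z + C` dominates the extended utility (`exists_affine_bound`). An
affine function is concave, so by minimality it dominates the envelope `Uc` as well
(`envelope_le_affine`). Hence `U ≤ Uc ≤ ε z + C` on `(0,∞)`: the envelope is finite there, and a
finite concave function on an open interval is continuous. Dividing by `z` and letting `z → ∞`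
squeezes `Uc z / z` between `U z / z → 0` and `ε + C / z → ε`, for every `ε > 0`.
-/

open MeasureTheory Filter Set Topology ENNReal

noncomputable section

/-- The utility function extended to all of `ℝ`, with value `−∞` on `(−∞,0)` and
`U(0) := lim_{x ↓ 0} U(x)` (here, by monotonicity, the infimum over `(0,∞)`). -/
def Uext (U : ℝ → ℝ) : ℝ → EReal := fun x =>
  if 0 < x then (U x : EReal)
  else if x = 0 then ⨅ z : {z : ℝ // 0 < z}, ((U z.1 : ℝ) : EReal)
  else ⊥

/-- A (possibly non-concave) utility function. -/
structure IsUtility (U : ℝ → ℝ) : Prop where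
  mono : ∀ ⦃x y : ℝ⦄, 0 < x → x ≤ y → U x ≤ U y
  nonconst : ∃ x y : ℝ, 0 < x ∧ 0 < y ∧ U x ≠ U y
  usc : UpperSemicontinuousOn U (Set.Ioi 0)
  growth : Filter.Tendsto (fun x => U x / x) Filter.atTop (nhds 0)
  pos_limit : ∃ x : ℝ, 0 < x ∧ 0 < U x

/-- Concavity for `EReal`-valued functions on `ℝ`. -/
def ERealConcave (g : ℝ → EReal) : Prop :=
  ∀ x y : ℝ, ∀ t : ℝ, 0 ≤ t → t ≤ 1 →
    ((t : ℝ) : EReal) * g x + (((1 - t) : ℝ) : EReal) * g y ≤ g (t * x + (1 - t) * y)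

/-- `Uc` is the concave envelope of the utility `U`: the smallest concave function
dominating (the extension of) `U`. -/
def IsConcaveEnvelope (U : ℝ → ℝ) (Uc : ℝ → EReal) : Prop :=
  ERealConcave Uc ∧ (∀ x : ℝ, Uext U x ≤ Uc x) ∧
    ∀ g : ℝ → EReal, ERealConcave g → (∀ x : ℝ, Uext U x ≤ g x) → ∀ x : ℝ, Uc x ≤ g x

/-- The convex conjugate `V(y) = sup_{x > 0} (U(x) − x y)`. -/
def conj (U : ℝ → ℝ) (y : ℝ) : ℝ :=
  sSup ((fun x => U x - x * y) '' Set.Ioi (0 : ℝ))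

/-- The subdifferential of a convex function `V` (viewed on `(0,∞)`). -/
def subdiff (V : ℝ → ℝ) (y : ℝ) : Set ℝ :=
  {q : ℝ | ∀ z : ℝ, 0 < z → V y + q * (z - y) ≤ V z}

/-- The extended asymptotic elasticity `EAE(V) = limsup_{y ↓ 0} sup_{q ∈ ∂V(y)} |q| y / V(y)`. -/
def EAE (V : ℝ → ℝ) : EReal :=
  Filter.limsup (fun y : ℝ => ⨆ q ∈ subdiff V y, (((|q| * y / V y) : ℝ) : EReal))
    (nhdsWithin (0 : ℝ) (Set.Ioi 0))

/-- The positive part of an extended real number, as an element of `ℝ≥0∞`. -/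
def erealPos (a : EReal) : ℝ≥0∞ := if a = ⊤ then ⊤ else ENNReal.ofReal a.toReal

/-- The expectation of an `EReal`-valued function: `E[g] = E[g⁺] − E[g⁻]`, with the
convention `E[g] = −∞` whenever the negative part `g⁻` is not integrable. -/
def eexp {Ω : Type*} [MeasurableSpace Ω] (μ : Measure Ω) (g : Ω → EReal) : EReal :=
  if (∫⁻ ω, erealPos (-(g ω)) ∂μ) < ⊤ then
    ((∫⁻ ω, erealPos (g ω) ∂μ : ℝ≥0∞) : EReal) - (((∫⁻ ω, erealPos (-(g ω)) ∂μ).toReal : ℝ) : EReal)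
  else ⊥

/-- The set `C(x)` of attainable terminal liquidation values: nonnegative measurable `f`
with `E[Z f] ≤ x`. -/
def Cset {Ω : Type*} [MeasurableSpace Ω] (μ : Measure Ω) (Z : Ω → ℝ) (x : ℝ) :
    Set (Ω → ℝ) :=
  {f | Measurable f ∧ (∀ ω, 0 ≤ f ω) ∧
    (∫⁻ ω, ENNReal.ofReal (Z ω * f ω) ∂μ) ≤ ENNReal.ofReal x}

/-- The value function `u(x, W) = sup {E[W(f)] : f ∈ C(x)}`. -/
def valueFn {Ω : Type*} [MeasurableSpace Ω] (μ : Measure Ω) (Z : Ω → ℝ)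
    (W : ℝ → EReal) (x : ℝ) : EReal :=
  ⨆ f ∈ Cset μ Z x, eexp μ (fun ω => W (f ω))

end
lemma exists_affine_bound {U : ℝ → ℝ} (hU : IsUtility U) {ε : ℝ} (hε : 0 < ε) :
    ∃ C : ℝ, ∀ x : ℝ, Uext U x ≤ ((ε * x + C : ℝ) : EReal) := by
  obtain ⟨N, hN⟩ := eventually_atTop.1
    (((tendsto_order.1 hU.growth).2 ε hε).and (eventually_gt_atTop (0 : ℝ)))
  have hN0 : 0 < N := (hN N le_rfl).2
  have habs := le_abs_self (U N)
  have habs0 := abs_nonneg (U N)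
  refine ⟨|U N|, fun x => ?_⟩
  unfold Uext
  split_ifs with hx hx0
  · rw [EReal.coe_le_coe_iff]
    have hεx : 0 < ε * x := mul_pos hε hx
    rcases le_total x N with h | h
    · linarith [hU.mono hx h]
    · linarith [(div_lt_iff₀ hx).1 (hN x h).1]
  · refine (iInf_le _ (⟨N, hN0⟩ : {z : ℝ // 0 < z})).trans ?_
    rw [EReal.coe_le_coe_iff, hx0]
    linarith
  · exact bot_le

lemma envelope_le_affine {U : ℝ → ℝ} (hU : IsUtility U) {Uc : ℝ → EReal}
    (hUc : IsConcaveEnvelope U Uc) {ε : ℝ} (hε : 0 < ε) :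
    ∃ C : ℝ, ∀ x : ℝ, Uc x ≤ ((ε * x + C : ℝ) : EReal) := by
  obtain ⟨C, hC⟩ := exists_affine_bound hU hε
  refine ⟨C, hUc.2.2 (fun x => ((ε * x + C : ℝ) : EReal)) ?_ hC⟩
  intro x y t _ _
  simp only [← EReal.coe_mul, ← EReal.coe_add, EReal.coe_le_coe_iff]
  apply le_of_eq
  ring

/-- The concave envelope `U_c` of a utility function `U` is real-valued (finite) and
continuous on `(0,∞)`, and satisfies the growth condition `lim_{x→∞} U_c(x)/x = 0`. -/
theorem concave_envelope_finite_continuous_growth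
    (U : ℝ → ℝ) (hU : IsUtility U) (Uc : ℝ → EReal) (hUc : IsConcaveEnvelope U Uc) :
    (∀ x : ℝ, 0 < x → Uc x ≠ ⊤ ∧ Uc x ≠ ⊥) ∧
    ContinuousOn (fun x : ℝ => (Uc x).toReal) (Set.Ioi 0) ∧
    Filter.Tendsto (fun x : ℝ => (Uc x).toReal / x) Filter.atTop (nhds 0) := by
  have hlow : ∀ x : ℝ, 0 < x → ((U x : ℝ) : EReal) ≤ Uc x := fun x hx => by
    simpa [Uext, hx] using hUc.2.1 x
  have hfin : ∀ x : ℝ, 0 < x → Uc x ≠ ⊤ ∧ Uc x ≠ ⊥ := fun x hx => by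
    obtain ⟨C, hC⟩ := envelope_le_affine hU hUc one_pos
    exact ⟨((hC x).trans_lt (EReal.coe_lt_top _)).ne,
      ((EReal.bot_lt_coe _).trans_le (hlow x hx)).ne'⟩
  have hcoe : ∀ x : ℝ, 0 < x → (((Uc x).toReal : ℝ) : EReal) = Uc x := fun x hx =>
    EReal.coe_toReal (hfin x hx).1 (hfin x hx).2
  refine ⟨hfin, ?_, ?_⟩
  · refine ConcaveOn.continuousOn isOpen_Ioi ⟨convex_Ioi 0, ?_⟩
    intro x hx y hy a b ha hb hab
    have hxy : 0 < a * x + b * y := (convex_Ioi (0 : ℝ)) hx hy ha hb hab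
    obtain rfl : b = 1 - a := by linarith
    have h := hUc.1 x y a ha (by linarith)
    rw [← hcoe x hx, ← hcoe y hy, ← hcoe _ hxy] at h
    exact_mod_cast h
  · refine tendsto_order.2 ⟨fun a ha => ?_, fun a ha => ?_⟩
    · filter_upwards [(tendsto_order.1 hU.growth).1 a ha, eventually_gt_atTop (0 : ℝ)]
        with x hx hx0
      have h := hlow x hx0
      rw [← hcoe x hx0, EReal.coe_le_coe_iff] at h
      exact hx.trans_le (div_le_div_of_nonneg_right h hx0.le)
    · -- Slope `a / 2` leaves room for the remainder `C / x`, which is below `a / 2` for large `x`.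
      obtain ⟨C, hC⟩ := envelope_le_affine hU hUc (half_pos ha)
      filter_upwards [eventually_gt_atTop (0 : ℝ), eventually_gt_atTop (C / (a / 2))]
        with x hx0 hx
      have h := hC x
      rw [← hcoe x hx0, EReal.coe_le_coe_iff] at h
      rw [div_lt_iff₀ (half_pos ha)] at hx
      rw [div_lt_iff₀ hx0]
      linarith
end

section
/- For a utility function U with concave envelope U_c, the set {U < U_c} := {x ∈ (0,∞) : U(x) < U_c(x)} is open, its connected components form a countable family of bounded open intervals, and U_c is affine on each of these intervals. -/
/-!
The proof rests on one consequence of minimality (`envelope_le_line`): every affine function that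
dominates `U` on `(0,∞)` dominates `Uc`.

* Sublinear growth provides dominating lines of every positive slope, so `Uc` is finite on
  `(0,∞)`. Its real version `f` is then concave, hence continuous, there.
* Let `U x < f x` and choose `U x < r < f x`. On a small interval `[p, q]` around `x` we have
  `U < r < f`. The line through `(p, f p)` and `(q, f q)` exceeds `r`, hence `U`, on `[p, q]`; outside
  `[p, q]` it lies above `f ≥ U` by concavity. Hence it dominates `U`, and therefore `f`, on
  `(0,∞)`; as `f` is at least its own chord, the two coincide on `[p, q]` (`local_affine`).
  So `{U < Uc}` is open and `f` is locally affine there, and therefore affine on every connected component.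
* On an unbounded component, `f z = m * z + c` for all large `z`. Monotonicity gives `0 ≤ m`.
  If `m > 0`, a dominating line of slope `m / 2` contradicts `Uc z = m * z + c` for large `z`. If
  `m = 0`, then at a point `N` of the component `U N < c`, and the line through `(0, U N)` and
  `(N, c)` dominates `U` while being smaller than `c` to the left of `N`.
-/

open MeasureTheory Filter Set Topology ENNReal

/-! ### Dominating lines and finiteness of the envelope -/

/-- A line dominating `U` on `(0,∞)` dominates the concave envelope on all of `ℝ`. -/
lemma envelope_le_line {U : ℝ → ℝ} {Uc : ℝ → EReal} (hUc : IsConcaveEnvelope U Uc) {m c : ℝ}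
    (h : ∀ z : ℝ, 0 < z → U z ≤ m * z + c) (z : ℝ) : Uc z ≤ ((m * z + c : ℝ) : EReal) := by
  refine hUc.2.2 (fun z => ((m * z + c : ℝ) : EReal)) ?_ ?_ z
  · intro x y t _ _
    rw [← EReal.coe_mul, ← EReal.coe_mul, ← EReal.coe_add, EReal.coe_le_coe_iff]
    apply le_of_eq
    ring
  · intro x
    unfold Uext
    split_ifs with h1 h2
    · exact_mod_cast h x h1
    · subst h2
      -- `U(0)` is an infimum of values `U w ≤ m * w + c`, and the right side tends to `c`.
      have ht : Tendsto (fun w : ℝ => ((m * w + c : ℝ) : EReal)) (𝓝[>] 0)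
          (𝓝 ((m * 0 + c : ℝ) : EReal)) := by
        have hc : Continuous (fun w : ℝ => ((m * w + c : ℝ) : EReal)) :=
          continuous_coe_real_ereal.comp (by fun_prop)
        exact (hc.tendsto 0).mono_left nhdsWithin_le_nhds
      refine ge_of_tendsto ht ?_
      filter_upwards [self_mem_nhdsWithin] with w hw
      exact (iInf_le _ (⟨w, hw⟩ : {z : ℝ // 0 < z})).trans (by exact_mod_cast h w hw)
    · exact bot_le

/-- Sublinear growth: `U` is dominated on `(0,∞)` by lines of arbitrarily small positive slope. -/
lemma exists_line {U : ℝ → ℝ} (hU : IsUtility U) {e : ℝ} (he : 0 < e) :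
    ∃ c : ℝ, ∀ z : ℝ, 0 < z → U z ≤ e * z + c := by
  obtain ⟨X, hX⟩ := eventually_atTop.1 ((hU.growth.eventually_lt_const he).and
    (eventually_gt_atTop 0))
  refine ⟨|U X|, fun z hz => ?_⟩
  have hXp := (hX X le_rfl).2
  rcases le_total z X with h | h
  · have := hU.mono hz h
    have := le_abs_self (U X)
    have : 0 < e * z := by positivity
    linarith
  · have := (div_lt_iff₀ hz).1 (hX z h).1
    have := abs_nonneg (U X)
    linarith

lemma envelope_ge {U : ℝ → ℝ} {Uc : ℝ → EReal} (hUc : IsConcaveEnvelope U Uc) {z : ℝ}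
    (hz : 0 < z) : (U z : EReal) ≤ Uc z := by
  have := hUc.2.1 z
  rwa [Uext, if_pos hz] at this

lemma envelope_coe {U : ℝ → ℝ} (hU : IsUtility U) {Uc : ℝ → EReal}
    (hUc : IsConcaveEnvelope U Uc) {z : ℝ} (hz : 0 < z) : ((Uc z).toReal : EReal) = Uc z := by
  obtain ⟨c, hc⟩ := exists_line hU one_pos
  refine EReal.coe_toReal ?_ ?_
  · exact ((envelope_le_line hUc hc z).trans_lt (EReal.coe_lt_top _)).ne
  · exact ((EReal.bot_lt_coe _).trans_le (envelope_ge hUc hz)).ne'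

lemma envelope_concaveOn {U : ℝ → ℝ} (hU : IsUtility U) {Uc : ℝ → EReal}
    (hUc : IsConcaveEnvelope U Uc) : ConcaveOn ℝ (Ioi 0) (fun z => (Uc z).toReal) := by
  refine ⟨convex_Ioi 0, fun x hx y hy a b ha hb hab => ?_⟩
  have hxy : (0 : ℝ) < a * x + b * y := convex_Ioi (0 : ℝ) hx hy ha hb hab
  obtain rfl : b = 1 - a := by linarith
  have h := hUc.1 x y a ha (by linarith)
  rw [← envelope_coe hU hUc hx, ← envelope_coe hU hUc hy, ← envelope_coe hU hUc hxy] at h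
  simp only [smul_eq_mul]
  exact_mod_cast h

/-! ### Local and global affinity -/

lemma three_point {f : ℝ → ℝ} (hf : ConcaveOn ℝ (Ioi 0) f) {a b c : ℝ} (ha : 0 < a)
    (hab : a < b) (hbc : b < c) : (c - b) * f a + (b - a) * f c ≤ (c - a) * f b := by
  have h := hf.slope_anti_adjacent (x := a) (y := b) (z := c) ha (by simp; linarith) hab hbc
  rw [div_le_div_iff₀ (by linarith) (by linarith)] at h
  linarith

/-- Around a point where `U < Uc`, this inequality persists and the envelope is affine. -/
lemma local_affine {U : ℝ → ℝ} (hU : IsUtility U) {Uc : ℝ → EReal}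
    (hUc : IsConcaveEnvelope U Uc) {x : ℝ} (hx : 0 < x) (hlt : (U x : EReal) < Uc x) :
    (∀ᶠ z in 𝓝 x, 0 < z ∧ (U z : EReal) < Uc z) ∧
      ∃ m c : ℝ, ∀ᶠ z in 𝓝 x, (Uc z).toReal = m * z + c := by
  have hconc := envelope_concaveOn hU hUc
  set f : ℝ → ℝ := fun z => (Uc z).toReal with hf
  have hcoe : ∀ z, 0 < z → ((f z : ℝ) : EReal) = Uc z := fun z hz => envelope_coe hU hUc hz
  have hUf : ∀ z, 0 < z → U z ≤ f z := fun z hz => by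
    have := envelope_ge hUc hz
    rw [← hcoe z hz] at this
    exact_mod_cast this
  have hlt' : U x < f x := by
    rw [← hcoe x hx] at hlt
    exact_mod_cast hlt
  obtain ⟨r, hr1, hr2⟩ := exists_between hlt'
  have hnh : 𝓝[Ioi 0] x = 𝓝 x := isOpen_Ioi.nhdsWithin_eq hx
  have hcont : ContinuousAt f x :=
    (hconc.continuousOn isOpen_Ioi).continuousAt (isOpen_Ioi.mem_nhds hx)
  have e1 : ∀ᶠ z in 𝓝 x, U z < r := hnh ▸ hU.usc x hx r hr1
  have e2 : ∀ᶠ z in 𝓝 x, r < f z := hcont.eventually_const_lt hr2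
  have e : ∀ᶠ z in 𝓝 x, 0 < z ∧ U z < r ∧ r < f z := (eventually_gt_nhds hx).and (e1.and e2)
  refine ⟨?_, ?_⟩
  · filter_upwards [e] with z hz
    refine ⟨hz.1, ?_⟩
    rw [← hcoe z hz.1]
    exact_mod_cast hz.2.1.trans hz.2.2
  obtain ⟨d, hd, hball⟩ := Metric.eventually_nhds_iff.1 e
  have hI : ∀ z ∈ Icc (x - d / 2) (x + d / 2), 0 < z ∧ U z < r ∧ r < f z := fun z hz => by
    apply hball
    rw [Real.dist_eq, abs_lt]
    constructor <;> linarith [hz.1, hz.2]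
  obtain ⟨p, hp⟩ : ∃ p, p = x - d / 2 := ⟨_, rfl⟩
  obtain ⟨q, hq⟩ : ∃ q, q = x + d / 2 := ⟨_, rfl⟩
  rw [← hp, ← hq] at hI
  have hpq : p < q := by linarith
  have hP := hI p ⟨le_rfl, hpq.le⟩
  have hQ := hI q ⟨hpq.le, le_rfl⟩
  have hqp : 0 < q - p := by linarith
  obtain ⟨m, hm⟩ : ∃ m, m = (f q - f p) / (q - p) := ⟨_, rfl⟩
  -- `m * z + (f p - m * p)` is the line through `(p, f p)` and `(q, f q)`.
  have hline : ∀ z, (q - p) * (m * z + (f p - m * p)) = (q - z) * f p + (z - p) * f q := by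
    intro z
    rw [hm]
    field_simp
    ring
  have hdom : ∀ z, 0 < z → U z ≤ m * z + (f p - m * p) := by
    intro z hz
    refine le_of_mul_le_mul_left ?_ hqp
    rw [hline]
    rcases lt_or_ge z p with h | h
    · nlinarith [three_point hconc hz h hpq, hUf z hz]
    rcases lt_or_ge q z with h' | h'
    · nlinarith [three_point hconc hP.1 hpq h', hUf z hz]
    · nlinarith [hI z ⟨h, h'⟩, mul_nonneg (sub_nonneg.2 h') (sub_nonneg.2 hP.2.2.le),
        mul_nonneg (sub_nonneg.2 h) (sub_nonneg.2 hQ.2.2.le),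
        mul_le_mul_of_nonneg_left (hI z ⟨h, h'⟩).2.1.le hqp.le]
  refine ⟨m, f p - m * p, ?_⟩
  filter_upwards [Ioo_mem_nhds (show p < x by linarith) (show x < q by linarith)] with z hz
  have hz0 : 0 < z := hP.1.trans hz.1
  apply le_antisymm
  · have := envelope_le_line hUc hdom z
    rw [← hcoe z hz0] at this
    exact_mod_cast this
  · refine le_of_mul_le_mul_left ?_ hqp
    rw [hline]
    exact three_point hconc hP.1 hz.1 hz.2

/-- A locally affine function on an open preconnected set is affine: its second derivative
vanishes. -/
lemma affine_of_local {f : ℝ → ℝ} {C : Set ℝ} (ho : IsOpen C) (hc : IsPreconnected C)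
    (h : ∀ x ∈ C, ∃ m c : ℝ, ∀ᶠ z in 𝓝 x, f z = m * z + c) :
    ∃ m c : ℝ, ∀ z ∈ C, f z = m * z + c := by
  have hlin : ∀ m c y : ℝ, HasDerivAt (fun z => m * z + c) m y := fun m c y => by
    simpa using ((hasDerivAt_id y).const_mul m).add_const c
  have hd : ∀ x ∈ C, DifferentiableAt ℝ f x := fun x hx => by
    obtain ⟨m, c, e⟩ := h x hx
    exact ((hlin m c x).congr_of_eventuallyEq e).differentiableAt
  have hdd : ∀ x ∈ C, HasDerivAt (deriv f) 0 x := fun x hx => by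
    obtain ⟨m, c, e⟩ := h x hx
    refine (hasDerivAt_const x m).congr_of_eventuallyEq ?_
    filter_upwards [e.eventually_nhds] with y hy
    exact ((hlin m c y).congr_of_eventuallyEq hy).deriv
  obtain ⟨m, hm⟩ := ho.exists_is_const_of_deriv_eq_zero hc
    (fun x hx => (hdd x hx).differentiableAt.differentiableWithinAt)
    (fun x hx => (hdd x hx).deriv)
  have hg : ∀ x ∈ C, HasDerivAt (fun z => f z - m * z) 0 x := fun x hx => by
    have h1 := (hd x hx).hasDerivAt
    rw [hm x hx] at h1
    have h2 := h1.sub ((hasDerivAt_id x).const_mul m)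
    rw [mul_one, sub_self] at h2
    exact h2
  obtain ⟨c, hc'⟩ := ho.exists_is_const_of_deriv_eq_zero hc
    (fun x hx => (hg x hx).differentiableAt.differentiableWithinAt)
    (fun x hx => (hg x hx).deriv)
  exact ⟨m, c, fun z hz => by linarith [hc' z hz]⟩

/-! ### Boundedness of the components -/

/-- The envelope cannot be affine on a half-line on which it stays strictly above `U`. -/
lemma no_affine_halfline {U : ℝ → ℝ} (hU : IsUtility U) {Uc : ℝ → EReal}
    (hUc : IsConcaveEnvelope U Uc) {x m c : ℝ} (hx : 0 < x)
    (hlt : ∀ z, x ≤ z → (U z : EReal) < Uc z)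
    (heq : ∀ z, x ≤ z → Uc z = ((m * z + c : ℝ) : EReal)) : False := by
  have hlt' : ∀ z, x ≤ z → U z < m * z + c := fun z hz => by
    have := hlt z hz
    rw [heq z hz] at this
    exact_mod_cast this
  have hle : ∀ m' c' : ℝ, (∀ z, 0 < z → U z ≤ m' * z + c') →
      ∀ z, x ≤ z → m * z + c ≤ m' * z + c' := fun m' c' h z hz => by
    have := envelope_le_line hUc h z
    rw [heq z hz] at this
    exact_mod_cast this
  rcases lt_trichotomy m 0 with hm | hm | hm
  · -- A negative slope would force `U` below `U x` far to the right.
    obtain ⟨z, hz1, hz2⟩ := ((tendsto_id.const_mul_atTop_of_neg hm).eventually_lt_atBot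
      (U x - c) |>.and (eventually_ge_atTop x)).exists
    have h1 := hlt' z hz2
    have h2 := hU.mono hx hz2
    simp only [id] at hz1
    linarith
  · subst hm
    have hN := hlt' (x + 1) (by linarith)
    have hN0 : 0 < x + 1 := by linarith
    have hδ : 0 < c - U (x + 1) := by linarith
    have key := hle ((c - U (x + 1)) / (x + 1)) (U (x + 1)) (fun z hz => by
      rcases le_total z (x + 1) with h | h
      · have := hU.mono hz h
        have : 0 < (c - U (x + 1)) / (x + 1) * z := by positivity
        linarith
      · have h1 := hlt' z (by linarith)
        have h2 : (c - U (x + 1)) / (x + 1) * (x + 1) ≤ (c - U (x + 1)) / (x + 1) * z :=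
          mul_le_mul_of_nonneg_left h (by positivity)
        rw [div_mul_cancel₀ _ hN0.ne'] at h2
        linarith) x le_rfl
    have h3 : (c - U (x + 1)) / (x + 1) * x < (c - U (x + 1)) / (x + 1) * (x + 1) :=
      mul_lt_mul_of_pos_left (by linarith) (by positivity)
    rw [div_mul_cancel₀ _ hN0.ne'] at h3
    linarith
  · obtain ⟨c', hc'⟩ := exists_line hU (half_pos hm)
    obtain ⟨z, hz1, hz2⟩ := ((tendsto_id.const_mul_atTop (half_pos hm)).eventually_gt_atTop
      (c' - c) |>.and (eventually_ge_atTop x)).exists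
    have := hle _ _ hc' z hz2
    simp only [id] at hz1
    linarith

/-! ### The structure theorem -/

/-- The set `{U < U_c}` is open, its connected components form a countable family of
bounded open intervals, and `U_c` is affine on each of these intervals. -/
theorem concave_envelope_structure
    (U : ℝ → ℝ) (hU : IsUtility U) (Uc : ℝ → EReal) (hUc : IsConcaveEnvelope U Uc) :
    IsOpen {x : ℝ | 0 < x ∧ ((U x : ℝ) : EReal) < Uc x} ∧
    Set.Countable {C : Set ℝ | ∃ x ∈ {x : ℝ | 0 < x ∧ ((U x : ℝ) : EReal) < Uc x},
      C = connectedComponentIn {x : ℝ | 0 < x ∧ ((U x : ℝ) : EReal) < Uc x} x} ∧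
    ∀ x ∈ {x : ℝ | 0 < x ∧ ((U x : ℝ) : EReal) < Uc x}, ∃ a b : ℝ, a < b ∧
      connectedComponentIn {x : ℝ | 0 < x ∧ ((U x : ℝ) : EReal) < Uc x} x = Set.Ioo a b ∧
      ∃ m c : ℝ, ∀ z ∈ Set.Ioo a b, Uc z = (((m * z + c) : ℝ) : EReal) := by
  set S : Set ℝ := {x : ℝ | 0 < x ∧ ((U x : ℝ) : EReal) < Uc x} with hS
  have hopen : IsOpen S :=
    isOpen_iff_mem_nhds.2 fun x hx => (local_affine hU hUc hx.1 hx.2).1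
  refine ⟨hopen, ?_, ?_⟩
  · -- Every component contains a rational number, which determines it.
    refine (countable_range (fun q : ℚ => connectedComponentIn S (q : ℝ))).mono ?_
    rintro C ⟨x, hx, rfl⟩
    obtain ⟨q, hq⟩ := Rat.denseRange_cast.exists_mem_open hopen.connectedComponentIn
      ⟨x, mem_connectedComponentIn hx⟩
    exact ⟨q, (connectedComponentIn_eq hq).symm⟩
  · intro x hx
    have hCo : IsOpen (connectedComponentIn S x) := hopen.connectedComponentIn
    have hCp : IsPreconnected (connectedComponentIn S x) := isPreconnected_connectedComponentIn
    have hCx : x ∈ connectedComponentIn S x := mem_connectedComponentIn hx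
    have hCS : connectedComponentIn S x ⊆ S := connectedComponentIn_subset S x
    generalize connectedComponentIn S x = C at hCo hCp hCx hCS ⊢
    obtain ⟨m, c, hmc⟩ := affine_of_local hCo hCp
      fun y hy => (local_affine hU hUc (hCS hy).1 (hCS hy).2).2
    have hmc' : ∀ z ∈ C, Uc z = ((m * z + c : ℝ) : EReal) := fun z hz => by
      rw [← hmc z hz, envelope_coe hU hUc (hCS hz).1]
    have hbelow : BddBelow C := ⟨0, fun z hz => (hCS hz).1.le⟩
    have habove : BddAbove C := by
      by_contra hb
      have hIci : ∀ z, x ≤ z → z ∈ C := fun z hz => by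
        obtain ⟨w, hw, hzw⟩ := not_bddAbove_iff.1 hb z
        exact hCp.ordConnected.out hCx hw ⟨hz, hzw.le⟩
      exact no_affine_halfline hU hUc hx.1 (fun z hz => (hCS (hIci z hz)).2)
        fun z hz => hmc' z (hIci z hz)
    have hsub : C ⊆ Ioo (sInf C) (sSup C) := by
      rw [← interior_Icc]
      exact interior_maximal (fun z hz => ⟨csInf_le hbelow hz, le_csSup habove hz⟩) hCo
    have hC : C = Ioo (sInf C) (sSup C) :=
      hsub.antisymm (IsConnected.Ioo_csInf_csSup_subset ⟨⟨x, hCx⟩, hCp⟩ hbelow habove)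
    exact ⟨sInf C, sSup C, (hsub hCx).1.trans (hsub hCx).2, hC, m, c,
      fun z hz => hmc' z (hC ▸ hz)⟩
end

section
/- For the convex conjugate V of a utility function U, the asymptotic elasticity condition EAE(V) < ∞ holds if and only if there exist constants γ > 0 and y₀ > 0 such that V(μ y) ≤ μ^{−γ} V(y) for all μ ∈ (0,1] and all y ∈ (0, y₀]. -/
/-!
Write `V = conj U`. It is finite, convex and nonincreasing on `(0,∞)`, and positive near `0`.

If the elasticity is finite, then near `0` every subgradient `q ∈ ∂V(y)`, in particular the right
derivative, satisfies `|q| y ≤ γ V(y)` for some `γ > 0`. Hence `y ↦ y^γ V(y)` has nonnegative right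
derivative `y^(γ-1) (γ V(y) + y V'₊(y))`, so it is nondecreasing (`rpow_mul_mono`), and comparing
its values at `μ y` and `y` gives the growth bound.

Conversely, a subgradient `q` at `y` is nonpositive, and the subgradient inequality at `y / 2`
together with the growth bound for `μ = 1/2` gives
`V(y) + |q| y / 2 ≤ V(y/2) ≤ 2^γ V(y)`, i.e. `|q| y / V(y) ≤ 2 (2^γ - 1)`.
-/

open MeasureTheory Filter Set Topology ENNReal

/-- Sublinear growth of `U` makes the supremum defining `V(y)` finite. -/
lemma conj_bddAbove {U : ℝ → ℝ} (hU : IsUtility U) {y : ℝ} (hy : 0 < y) :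
    BddAbove ((fun x => U x - x * y) '' Ioi (0 : ℝ)) := by
  obtain ⟨X, hX⟩ := ((hU.growth.eventually_lt_const hy).and (eventually_gt_atTop 0)).exists_forall_of_atTop
  have hX0 : 0 < X := (hX X le_rfl).2
  refine ⟨max (U X) 0, ?_⟩
  rintro _ ⟨x, hx : 0 < x, rfl⟩
  rcases le_total x X with h | h
  · have h1 := hU.mono hx h
    have h2 : 0 < x * y := mul_pos hx hy
    exact le_max_of_le_left (by dsimp only; linarith)
  · have h1 := (div_lt_iff₀ hx).1 (hX x h).1
    exact le_max_of_le_right (by dsimp only; linarith)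

lemma le_conj {U : ℝ → ℝ} (hU : IsUtility U) {x y : ℝ} (hx : 0 < x) (hy : 0 < y) :
    U x - x * y ≤ conj U y :=
  le_csSup (conj_bddAbove hU hy) ⟨x, hx, rfl⟩

lemma conj_le {U : ℝ → ℝ} {y b : ℝ} (h : ∀ x, 0 < x → U x - x * y ≤ b) : conj U y ≤ b := by
  apply csSup_le (Set.Nonempty.image _ nonempty_Ioi)
  rintro _ ⟨x, hx, rfl⟩
  exact h x hx

lemma conj_antitone {U : ℝ → ℝ} (hU : IsUtility U) {y z : ℝ} (hy : 0 < y) (hyz : y ≤ z) :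
    conj U z ≤ conj U y := by
  refine conj_le fun x hx => le_trans ?_ (le_conj hU hx hy)
  have := mul_le_mul_of_nonneg_left hyz hx.le
  linarith

lemma conj_convexOn {U : ℝ → ℝ} (hU : IsUtility U) : ConvexOn ℝ (Ioi 0) (conj U) := by
  refine ⟨convex_Ioi 0, fun y hy z hz a b ha hb hab => conj_le fun x hx => ?_⟩
  have h1 := mul_le_mul_of_nonneg_left (le_conj hU hx hy) ha
  have h2 := mul_le_mul_of_nonneg_left (le_conj hU hx hz) hb
  simp only [smul_eq_mul]
  have h3 : U x - x * (a * y + b * z) = a * (U x - x * y) + b * (U x - x * z) := by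
    linear_combination (-U x) * hab
  linarith

lemma conj_pos {U : ℝ → ℝ} (hU : IsUtility U) :
    ∃ u : ℝ, 0 < u ∧ ∀ y, 0 < y → y < u → 0 < conj U y := by
  obtain ⟨x, hx, hUx⟩ := hU.pos_limit
  refine ⟨U x / x, div_pos hUx hx, fun y hy hyu => ?_⟩
  have h1 := le_conj hU hx hy
  have h2 := (lt_div_iff₀ hx).1 hyu
  linarith

/-- The right derivative of a convex function on `(0,∞)` is a subgradient, so that a bound on all
subgradients is a bound on the right derivative. -/
lemma rightDeriv_mem_subdiff {V : ℝ → ℝ} (hV : ConvexOn ℝ (Ioi 0) V) {y : ℝ} (hy : 0 < y) :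
    derivWithin V (Ioi y) y ∈ subdiff V y := by
  have hyi : y ∈ interior (Ioi (0 : ℝ)) := by rwa [interior_Ioi]
  intro z hz
  rcases lt_trichotomy z y with h | h | h
  · have h1 := (hV.slope_le_leftDeriv_of_mem_interior hz hyi h).trans
      (hV.leftDeriv_le_rightDeriv_of_mem_interior hyi)
    rw [slope_def_field, div_le_iff₀ (sub_pos.2 h)] at h1
    linarith
  · simp [h]
  · have h1 := hV.rightDeriv_le_slope_of_mem_interior hyi hz h
    rw [slope_def_field, le_div_iff₀ (sub_pos.2 h)] at h1
    linarith

/-- If every subgradient `q` of `V` at `y` satisfies `|q| y ≤ γ V(y)`, then `y ↦ y^γ V(y)` has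
nonnegative right derivative, hence is nondecreasing. -/
lemma rpow_mul_mono {V : ℝ → ℝ} (hV : ConvexOn ℝ (Ioi 0) V) {γ u : ℝ}
    (h : ∀ y, 0 < y → y < u → ∀ q ∈ subdiff V y, |q| * y ≤ γ * V y) {a b : ℝ}
    (ha : 0 < a) (hab : a ≤ b) (hb : b < u) : a ^ γ * V a ≤ b ^ γ * V b := by
  have hcont : ContinuousOn (fun x : ℝ => x ^ γ * V x) (Icc a b) := by
    apply ContinuousOn.mul
    · exact fun x hx => (Real.continuousAt_rpow_const x γ
        (Or.inl (ha.trans_le hx.1).ne')).continuousWithinAt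
    · exact (hV.continuousOn isOpen_Ioi).mono fun x hx => ha.trans_le hx.1
  refine image_le_of_deriv_right_le_deriv_boundary (f := fun _ => a ^ γ * V a) (f' := fun _ => 0)
    (B := fun x => x ^ γ * V x)
    (B' := fun x => γ * x ^ (γ - 1) * V x + x ^ γ * derivWithin V (Ioi x) x)
    continuousOn_const (fun x _ => hasDerivWithinAt_const _ _ _) le_rfl hcont ?_ ?_ ⟨hab, le_rfl⟩
  · intro x hx
    have hx0 : 0 < x := ha.trans_le hx.1
    have hxi : x ∈ interior (Ioi (0 : ℝ)) := by rwa [interior_Ioi]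
    exact (Real.hasDerivAt_rpow_const (Or.inl hx0.ne')).hasDerivWithinAt.mul
      (hV.hasDerivWithinAt_rightDeriv_of_mem_interior hxi).Ici_of_Ioi
  · intro x hx
    have hx0 : 0 < x := ha.trans_le hx.1
    have h1 := h x hx0 (hx.2.trans hb) _ (rightDeriv_mem_subdiff hV hx0)
    have h2 : x ^ γ = x ^ (γ - 1) * x := by
      rw [← Real.rpow_add_one hx0.ne']; congr 1; ring
    have h3 := mul_le_mul_of_nonneg_right (neg_abs_le (derivWithin V (Ioi x) x)) hx0.le
    have h4 : 0 ≤ x ^ (γ - 1) * (γ * V x + derivWithin V (Ioi x) x * x) :=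
      mul_nonneg (Real.rpow_nonneg hx0.le _) (by linarith)
    rw [h2]
    linarith

/-- `EAE(V) < ∞` iff there are `γ > 0` and `y₀ > 0` with
`V(μ y) ≤ μ^{−γ} V(y)` for all `μ ∈ (0,1]` and `y ∈ (0,y₀]`. -/
theorem EAE_lt_top_iff (U : ℝ → ℝ) (hU : IsUtility U) :
    EAE (conj U) < ⊤ ↔
      ∃ γ : ℝ, 0 < γ ∧ ∃ y₀ : ℝ, 0 < y₀ ∧ ∀ m : ℝ, 0 < m → m ≤ 1 →
        ∀ y : ℝ, 0 < y → y ≤ y₀ → conj U (m * y) ≤ m ^ (-γ) * conj U y := by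
  have hV := conj_convexOn hU
  obtain ⟨u, hu, hpos⟩ := conj_pos hU
  constructor
  · intro hE
    obtain ⟨c, hc, -⟩ := EReal.lt_iff_exists_real_btwn.1 hE
    obtain ⟨w, hw, hwc⟩ := mem_nhdsGT_iff_exists_Ioo_subset.1 (eventually_lt_of_limsup_lt hc)
    have hw : 0 < w := hw
    have key : ∀ y, 0 < y → y < min u w → ∀ q ∈ subdiff (conj U) y,
        |q| * y ≤ max c 1 * conj U y := by
      intro y hy hyuw q hq
      have hVy := hpos y hy (hyuw.trans_le (min_le_left _ _))
      have h1 : (⨆ q ∈ subdiff (conj U) y, (((|q| * y / conj U y) : ℝ) : EReal)) < c :=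
        hwc ⟨hy, hyuw.trans_le (min_le_right _ _)⟩
      have h2 := EReal.coe_lt_coe_iff.1 ((le_iSup₂
        (f := fun q (_ : q ∈ subdiff (conj U) y) => (((|q| * y / conj U y) : ℝ) : EReal))
        q hq).trans_lt h1)
      rw [div_lt_iff₀ hVy] at h2
      exact h2.le.trans (mul_le_mul_of_nonneg_right (le_max_left _ _) hVy.le)
    refine ⟨max c 1, by positivity, min u w / 2, half_pos (lt_min hu hw), ?_⟩
    intro m hm hm1 y hy hyy
    have hmy : m * y ≤ y := mul_le_of_le_one_left hy.le hm1
    have h1 := rpow_mul_mono hV key (mul_pos hm hy) hmy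
      (hyy.trans_lt (half_lt_self (lt_min hu hw)))
    rw [Real.mul_rpow hm.le hy.le, mul_comm (m ^ _), mul_assoc] at h1
    have h2 := le_of_mul_le_mul_left h1 (Real.rpow_pos_of_pos hy _)
    rw [Real.rpow_neg hm.le, ← div_eq_inv_mul, le_div_iff₀ (Real.rpow_pos_of_pos hm _)]
    linarith
  · rintro ⟨γ, hγ, y₀, hy₀, h⟩
    refine lt_of_le_of_lt ?_ (EReal.coe_lt_top (2 * ((1 / 2 : ℝ) ^ (-γ) - 1)))
    refine limsup_le_of_le (by isBoundedDefault) ?_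
    filter_upwards [Ioo_mem_nhdsGT (lt_min hu hy₀)] with y hy
    obtain ⟨hy, hyu⟩ := hy
    have hVy := hpos y hy (hyu.trans_le (min_le_left _ _))
    refine iSup₂_le fun q hq => EReal.coe_le_coe_iff.2 ?_
    have hq0 : q ≤ 0 := by
      have h1 := hq (y + 1) (by linarith)
      have h2 := conj_antitone hU hy (by linarith : y ≤ y + 1)
      linarith
    -- The subgradient inequality at `y / 2`, against the growth bound with `μ = 1 / 2`.
    have h1 := hq (1 / 2 * y) (by linarith)
    have h2 := h (1 / 2) (by norm_num) (by norm_num) y hy (hyu.le.trans (min_le_right _ _))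
    rw [div_le_iff₀ hVy, abs_of_nonpos hq0]
    linarith
end

section
/- Suppose the convex conjugate V of the utility function U satisfies EAE(V) < ∞. Then the condition 'E[V(y Z)] < ∞ for every y > 0' holds if and only if u(x, U) < ∞ for some x > 0. -/
/-! The easy implication is Fenchel's inequality `U(f) ≤ V(Z) + Z f`, integrated over `f ∈ C(1)`.

For the converse, write `V = conj U`. Finiteness of the elasticity yields a doubling property
`V(y / ρ) ≤ 2 V(y)` for small `y`, with some `ρ > 1` (`exists_doubling`). It has two consequences.
If `E[V(y Z)⁺] = ∞` for one `y`, the same holds for arbitrarily large `y`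
(`lintegral_conj_eq_top`). And, although `U` need not be concave, there is a constant `C` such that
for every `ε > 0` there is a `B` with `U(ε + C h / y) ≥ h / 2 - B` whenever `y > 0` and
`0 ≤ h ≤ V(y)⁺` (`exists_U_bound`).

Suppose now that `u(x, U) < ∞` while `E[V(K Z)⁺] = ∞` for arbitrarily large `K`. Choose a measurable
`0 ≤ h ≤ V(K Z)⁺` with `E[h] = K x / (2 C)`, obtained by rescaling a simple function. The claim
`f = x / 2 + C h / (K Z)` satisfies `E[Z f] = x`, and the bound above with `ε = x / 2` gives
`E[U(f)] ≥ K x / (4 C) - 2 B` (`le_valueFn`). Since `B` does not depend on `K`, this tends to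
infinity with `K`, a contradiction. The explicit form of `f` avoids measurable selections, and the
rescaling of `h` handles probability spaces with atoms. -/
open MeasureTheory Filter Set Topology ENNReal

/-! ### The conjugate function -/

namespace DualValue

variable {U : ℝ → ℝ}

/-- The growth condition makes the supremum defining `V(y)` finite. -/
lemma conj_bdd (hU : IsUtility U) {y : ℝ} (hy : 0 < y) :
    BddAbove ((fun x => U x - x * y) '' Set.Ioi (0 : ℝ)) := by
  have h1 : ∀ᶠ x in atTop, U x / x < y := hU.growth.eventually_lt_const hy
  obtain ⟨X, hX⟩ := (h1.and (eventually_gt_atTop 0)).exists_forall_of_atTop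
  set X' := max X 1 with hX'
  have hX0 : 0 < X' := lt_of_lt_of_le one_pos (le_max_right _ _)
  refine ⟨max (U X') 0, ?_⟩
  rintro _ ⟨x, hx, rfl⟩
  have hx : 0 < x := hx
  rcases le_total x X' with h | h
  · have := hU.mono hx h
    have : 0 < x * y := mul_pos hx hy
    exact le_trans (by dsimp only; linarith) (le_max_left _ _)
  · have := (hX x ((le_max_left _ _).trans h)).1
    rw [div_lt_iff₀ hx] at this
    exact le_trans (by dsimp only; linarith) (le_max_right _ _)

lemma le_conj (hU : IsUtility U) {x y : ℝ} (hx : 0 < x) (hy : 0 < y) :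
    U x - x * y ≤ conj U y :=
  le_csSup (conj_bdd hU hy) ⟨x, hx, rfl⟩

lemma conj_le {y b : ℝ} (h : ∀ x, 0 < x → U x - x * y ≤ b) : conj U y ≤ b := by
  refine csSup_le ⟨_, 1, Set.mem_Ioi.2 one_pos, rfl⟩ ?_
  rintro _ ⟨x, hx, rfl⟩
  exact h x hx

lemma conj_anti (hU : IsUtility U) {y z : ℝ} (hy : 0 < y) (hyz : y ≤ z) :
    conj U z ≤ conj U y := by
  refine conj_le fun x hx => le_trans ?_ (le_conj hU hx hy)
  have := mul_le_mul_of_nonneg_left hyz hx.le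
  linarith

lemma conj_convex (hU : IsUtility U) : ConvexOn ℝ (Set.Ioi 0) (conj U) := by
  refine ⟨convex_Ioi 0, fun y hy z hz a b ha hb hab => conj_le fun x hx => ?_⟩
  have h1 := mul_le_mul_of_nonneg_left (le_conj hU hx hy) ha
  have h2 := mul_le_mul_of_nonneg_left (le_conj hU hx hz) hb
  simp only [smul_eq_mul]
  have : U x = a * U x + b * U x := by rw [← add_mul, hab, one_mul]
  nlinarith

lemma conj_cont (hU : IsUtility U) : ContinuousOn (conj U) (Set.Ioi 0) :=
  (conj_convex hU).continuousOn isOpen_Ioi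

lemma subdiff_nonempty (hU : IsUtility U) {y : ℝ} (hy : 0 < y) :
    (subdiff (conj U) y).Nonempty := by
  have hc := conj_convex hU
  have hi : y ∈ interior (Set.Ioi (0 : ℝ)) := by rw [interior_Ioi]; exact hy
  refine ⟨derivWithin (conj U) (Set.Ioi y) y, fun z hz => ?_⟩
  rcases lt_trichotomy y z with h | h | h
  · have := hc.rightDeriv_le_slope_of_mem_interior hi hz h
    rw [slope_def_field, le_div_iff₀ (by linarith)] at this
    linarith
  · subst h; simp
  · have h1 := hc.slope_le_leftDeriv_of_mem_interior hz hi h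
    have := h1.trans (hc.leftDeriv_le_rightDeriv_of_mem_interior hi)
    rw [slope_def_field, div_le_iff₀ (by linarith)] at this
    linarith

lemma conj_pos (hU : IsUtility U) : ∃ b > 0, ∀ y, 0 < y → y < b → 0 < conj U y := by
  obtain ⟨x, hx, hUx⟩ := hU.pos_limit
  refine ⟨U x / x, by positivity, fun y hy hyb => ?_⟩
  rw [lt_div_iff₀ hx] at hyb
  have := le_conj hU hx hy
  linarith

/-- A finite asymptotic elasticity, used at a single subgradient, bounds the growth of `V` at the
origin: shrinking `y` by a fixed factor `ρ` at most doubles `V(y)`. -/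
lemma exists_doubling (hU : IsUtility U) (hE : EAE (conj U) < ⊤) :
    ∃ y₀ > 0, ∃ ρ > 1, ∀ y, 0 < y → y ≤ y₀ →
      0 < conj U y ∧ conj U (y / ρ) ≤ 2 * conj U y := by
  obtain ⟨M₀, hM₀⟩ : ∃ M : ℝ, EAE (conj U) < M := by
    obtain ⟨q, hq, -⟩ := EReal.lt_iff_exists_real_btwn.1 hE
    exact ⟨q, hq⟩
  have hev := eventually_lt_of_limsup_lt hM₀
  obtain ⟨b, hb, hbpos⟩ := conj_pos hU
  obtain ⟨a, ha, hsub⟩ := mem_nhdsGT_iff_exists_Ioo_subset.1 hev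
  have ha : 0 < a := ha
  set M := max M₀ 1 with hM
  have hM1 : 1 ≤ M := le_max_right _ _
  refine ⟨min a b / 2, by positivity, 1 + 1 / (2 * M), by
    have : 0 < 1 / (2 * M) := by positivity
    linarith, fun y hy hyle => ?_⟩
  have hya : y < a := by
    have := min_le_left a b
    linarith
  have hyb : y < b := by
    have := min_le_right a b
    linarith
  refine ⟨hbpos y hy hyb, ?_⟩
  have hρ : 1 < 1 + 1 / (2 * M) := by
    have : 0 < 1 / (2 * M) := by positivity
    linarith
  set s := y / (1 + 1 / (2 * M)) with hs
  have hs0 : 0 < s := by positivity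
  have hys : y = s * (1 + 1 / (2 * M)) := by rw [hs]; field_simp
  have hsy : s < y := by rw [hs]; exact div_lt_self hy hρ
  have hVs : 0 < conj U s := hbpos s hs0 (hsy.trans hyb)
  obtain ⟨q, hq⟩ := subdiff_nonempty hU hs0
  have h1 : ((|q| * s / conj U s : ℝ) : EReal) < M₀ :=
    lt_of_le_of_lt (le_iSup₂ (f := fun q (_ : q ∈ subdiff (conj U) s) =>
      ((|q| * s / conj U s : ℝ) : EReal)) q hq) (hsub ⟨hs0, hsy.trans hya⟩)
  have h2 : |q| * s / conj U s < M := lt_of_lt_of_le (EReal.coe_lt_coe_iff.1 h1) (le_max_left _ _)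
  rw [div_lt_iff₀ hVs] at h2
  have h3 := hq y hy
  have h4 : y - s = s * (1 / (2 * M)) := by rw [hys]; ring
  have h5 : -(conj U s / 2) ≤ q * (y - s) := by
    have e : |q| * (y - s) ≤ conj U s / 2 := by
      rw [h4, ← mul_assoc, mul_one_div, div_le_iff₀ (by positivity)]
      linarith
    have : -(|q| * (y - s)) ≤ q * (y - s) := by
      have := mul_le_mul_of_nonneg_right (neg_abs_le q) (sub_nonneg.2 hsy.le)
      linarith
    linarith
  linarith

/-! ### Lower bounds for the utility -/

/-- A nearly optimal `x` in `V(y) = sup (U(x) - x y)` satisfies `x ≤ C V(y) / y`, because otherwise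
`V(y / ρ) ≥ U(x) - x y / ρ` would exceed `2 V(y)`. -/
lemma le_U_of_doubling (hU : IsUtility U) {y ρ : ℝ} (hρ : 1 < ρ) (hy : 0 < y)
    (hV : 0 < conj U y) (hd : conj U (y / ρ) ≤ 2 * conj U y) :
    conj U y / 2 ≤ U (3 / 2 / (1 - 1 / ρ) * (conj U y / y)) := by
  obtain ⟨_, ⟨x, hx, rfl⟩, hlt⟩ := exists_lt_of_lt_csSup
    (⟨_, 1, Set.mem_Ioi.2 one_pos, rfl⟩ : ((fun x => U x - x * y) '' Set.Ioi (0 : ℝ)).Nonempty)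
    (show conj U y / 2 < sSup _ from half_lt_self hV)
  have hx : 0 < x := hx
  have hρ' : 0 < 1 - 1 / ρ := by
    rw [sub_pos, div_lt_one (by linarith)]; exact hρ
  have h1 := le_conj hU hx (show 0 < y / ρ by positivity)
  have h2 : x * y * (1 - 1 / ρ) ≤ 3 / 2 * conj U y := by
    have : x * y * (1 - 1 / ρ) = x * y - x * (y / ρ) := by ring
    rw [this]
    dsimp only at hlt
    linarith
  have h3 : x ≤ 3 / 2 / (1 - 1 / ρ) * (conj U y / y) := by
    rw [div_mul_div_comm, le_div_iff₀ (by positivity)]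
    linarith
  have := hU.mono hx h3
  have : 0 < x * y := by positivity
  dsimp only at hlt
  linarith

/-- The explicit payoff `ε + C h / y` has utility at least `h / 2 - B`, for every partial target
`0 ≤ h ≤ V(y)⁺` and with `B` independent of `y`. The point `t ≥ y` with `V(t) / t = h / y` replaces
`y` when `h < V(y)`; this is what makes concavity of `U` unnecessary. -/
lemma exists_U_bound (hU : IsUtility U) (hE : EAE (conj U) < ⊤) :
    ∃ C > 0, ∀ ε > 0, ∃ B : ℝ, 0 ≤ B ∧ ∀ y h, 0 < y → 0 ≤ h → h ≤ max (conj U y) 0 →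
      -B ≤ U (ε + C * h / y) ∧ h / 2 - B ≤ U (ε + C * h / y) := by
  obtain ⟨y₀, hy₀, ρ, hρ, hd⟩ := exists_doubling hU hE
  have hρ' : 0 < 1 - 1 / ρ := by
    rw [sub_pos, div_lt_one (by linarith)]; exact hρ
  have hV₀ := (hd y₀ hy₀ le_rfl).1
  refine ⟨3 / 2 / (1 - 1 / ρ), by positivity, fun ε hε => ⟨conj U y₀ + |U ε|,
    by positivity, fun y h hy hh hhV => ?_⟩⟩
  set C := 3 / 2 / (1 - 1 / ρ) with hC
  have hC0 : 0 < C := by positivity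
  have hUε : U ε ≤ U (ε + C * h / y) := hU.mono hε (by
    have : 0 ≤ C * h / y := by positivity
    linarith)
  have hab := neg_abs_le (U ε)
  refine ⟨by linarith, ?_⟩
  by_cases hcase : y < y₀ ∧ conj U y₀ / y₀ ≤ h / y
  · obtain ⟨hyy, hr⟩ := hcase
    have hVy := (hd y hy hyy.le).1
    rw [max_eq_left hVy.le] at hhV
    have hcont : ContinuousOn (fun t => conj U t / t) (Set.Icc y y₀) := by
      have hsub : Set.Icc y y₀ ⊆ Set.Ioi 0 := fun t ht => lt_of_lt_of_le hy ht.1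
      exact ((conj_cont hU).mono hsub).div continuousOn_id fun t ht => (hsub ht).ne'
    obtain ⟨t, ht, hte⟩ := intermediate_value_Icc' hyy.le hcont
      (show h / y ∈ Set.Icc (conj U y₀ / y₀) (conj U y / y) from
        ⟨hr, div_le_div_of_nonneg_right hhV hy.le⟩)
    have ht0 : 0 < t := lt_of_lt_of_le hy ht.1
    obtain ⟨hVt, hdt⟩ := hd t ht0 ht.2
    have h1 := le_U_of_doubling hU hρ ht0 hVt hdt
    dsimp only at hte
    rw [← hC, hte] at h1
    have hpos : 0 < h / y := lt_of_lt_of_le (by positivity) hr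
    have h2 : U (C * (h / y)) ≤ U (ε + C * h / y) :=
      hU.mono (by positivity) (by rw [mul_div_assoc]; linarith)
    have h3 : h ≤ conj U t := by
      rw [div_eq_iff ht0.ne'] at hte
      rw [hte, div_mul_eq_mul_div, le_div_iff₀ hy]
      exact mul_le_mul_of_nonneg_left ht.1 hh
    have := abs_nonneg (U ε)
    linarith
  · have : h ≤ conj U y₀ := by
      by_cases hyy : y < y₀
      · have hr : h / y < conj U y₀ / y₀ := not_le.1 fun hr => hcase ⟨hyy, hr⟩
        rw [div_lt_div_iff₀ hy hy₀] at hr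
        by_contra! hcon
        have := mul_lt_mul'' hcon hyy hV₀.le hy.le
        linarith
      · exact hhV.trans (max_le (conj_anti hU hy₀ (not_lt.1 hyy)) hV₀.le)
    linarith

/-! ### Extended expectations -/

lemma erealPos_coe (a : ℝ) : erealPos (a : EReal) = ENNReal.ofReal a := by
  simp [erealPos]

lemma erealPos_le {a : EReal} {r : ℝ} (h : a ≤ r) : erealPos a ≤ ENNReal.ofReal r := by
  induction a with
  | bot => simp [erealPos]
  | coe a => rw [erealPos_coe]; exact ENNReal.ofReal_le_ofReal (EReal.coe_le_coe_iff.1 h)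
  | top => exact absurd h (by simp)

variable {Ω : Type*} [MeasurableSpace Ω] {μ : Measure Ω}

lemma eexp_le (g : Ω → EReal) : eexp μ g ≤ ((∫⁻ ω, erealPos (g ω) ∂μ : ℝ≥0∞) : EReal) := by
  unfold eexp
  split_ifs
  · refine EReal.sub_le_of_le_add ?_
    exact le_add_of_nonneg_right (by exact_mod_cast ENNReal.toReal_nonneg)
  · exact bot_le

lemma eexp_lt_top_of {g : Ω → EReal} (h : ∫⁻ ω, erealPos (g ω) ∂μ < ⊤) : eexp μ g < ⊤ := by
  refine (eexp_le g).trans_lt ?_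
  rw [lt_top_iff_ne_top]
  simpa using h.ne

lemma lintegral_lt_top_of_eexp {g : Ω → EReal} (hn : ∫⁻ ω, erealPos (-(g ω)) ∂μ < ⊤)
    (h : eexp μ g < ⊤) : ∫⁻ ω, erealPos (g ω) ∂μ < ⊤ := by
  by_contra hcon
  rw [not_lt, top_le_iff] at hcon
  rw [eexp, if_pos hn, hcon, EReal.coe_ennreal_top, EReal.top_sub_coe] at h
  exact lt_irrefl _ h

lemma le_eexp [IsProbabilityMeasure μ] {F h : Ω → ℝ} {B T : ℝ} (hB : 0 ≤ B) (hT : 0 ≤ T)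
    (hF : ∀ ω, -B ≤ F ω) (hFh : ∀ ω, h ω / 2 - B ≤ F ω)
    (hI : ∫⁻ ω, ENNReal.ofReal (h ω / 2) ∂μ = ENNReal.ofReal T) :
    ((T - 2 * B : ℝ) : EReal) ≤ eexp μ (fun ω => (F ω : EReal)) := by
  have hN : ∫⁻ ω, erealPos (-(F ω : EReal)) ∂μ ≤ ENNReal.ofReal B := by
    calc _ ≤ ∫⁻ _, ENNReal.ofReal B ∂μ := lintegral_mono fun ω => by
          rw [← EReal.coe_neg, erealPos_coe]
          exact ENNReal.ofReal_le_ofReal (by linarith [hF ω])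
      _ = _ := by simp
  have hP : ENNReal.ofReal T ≤ (∫⁻ ω, erealPos (F ω : EReal) ∂μ) + ENNReal.ofReal B := by
    calc _ = ∫⁻ ω, ENNReal.ofReal (h ω / 2) ∂μ := hI.symm
      _ ≤ ∫⁻ ω, (erealPos (F ω : EReal) + ENNReal.ofReal B) ∂μ := lintegral_mono fun ω => by
          rw [erealPos_coe]
          refine le_trans ?_ ENNReal.ofReal_add_le
          exact ENNReal.ofReal_le_ofReal (by linarith [hFh ω])
      _ = _ := by rw [lintegral_add_right _ measurable_const]; simp
  rw [eexp, if_pos (hN.trans_lt ENNReal.ofReal_lt_top)]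
  have hN' := ENNReal.toReal_mono ENNReal.ofReal_ne_top hN
  rw [ENNReal.toReal_ofReal hB] at hN'
  generalize (∫⁻ ω, erealPos (F ω : EReal) ∂μ) = P at hP ⊢
  generalize (∫⁻ ω, erealPos (-(F ω : EReal)) ∂μ).toReal = N at hN' ⊢
  induction P with
  | top => rw [EReal.coe_ennreal_top, EReal.top_sub_coe]; exact le_top
  | coe p =>
    have hP' := ENNReal.toReal_mono (by finiteness) hP
    rw [ENNReal.toReal_add (by finiteness) (by finiteness), ENNReal.toReal_ofReal hB,
      ENNReal.toReal_ofReal hT, ENNReal.coe_toReal] at hP'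
    have : (((p : ℝ≥0∞) : EReal)) = ((p : ℝ) : EReal) := rfl
    rw [this, ← EReal.coe_sub, EReal.coe_le_coe_iff]
    linarith

lemma lintegral_density {Z : Ω → ℝ} (hZpos : ∀ ω, 0 < Z ω)
    (hZint : Integrable Z μ) (hZexp : ∫ ω, Z ω ∂μ = 1) :
    ∫⁻ ω, ENNReal.ofReal (Z ω) ∂μ = 1 := by
  rw [← ofReal_integral_eq_lintegral_ofReal hZint (ae_of_all _ fun ω => (hZpos ω).le), hZexp]
  simp

/-! ### The two implications -/

lemma Uext_le (hU : IsUtility U) {x y : ℝ} (hx : 0 ≤ x) (hy : 0 < y) :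
    Uext U x ≤ ((conj U y + x * y : ℝ) : EReal) := by
  rcases hx.eq_or_lt with rfl | hx
  · simp only [Uext, lt_irrefl, if_false, if_true]
    refine EReal.le_of_forall_lt_iff_le.1 fun r hr => ?_
    rw [zero_mul, add_zero, EReal.coe_lt_coe_iff] at hr
    refine (iInf_le _ ⟨(r - conj U y) / y, div_pos (sub_pos.2 hr) hy⟩).trans ?_
    rw [EReal.coe_le_coe_iff]
    have := le_conj hU (div_pos (sub_pos.2 hr) hy) hy
    rw [div_mul_cancel₀ _ hy.ne'] at this
    linarith
  · simp only [Uext, hx, if_true]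
    rw [EReal.coe_le_coe_iff]
    linarith [le_conj hU hx hy]

/-- The negative part of `V(Z)` is integrable, since `V(Z) ≥ U(1) - Z`. -/
lemma neg_conj_lt_top [IsProbabilityMeasure μ] (hU : IsUtility U) {Z : Ω → ℝ}
    (hZpos : ∀ ω, 0 < Z ω) (hZint : Integrable Z μ) (hZexp : ∫ ω, Z ω ∂μ = 1) :
    ∫⁻ ω, erealPos (-((conj U (1 * Z ω) : ℝ) : EReal)) ∂μ < ⊤ := by
  calc _ ≤ ∫⁻ ω, (ENNReal.ofReal (Z ω) + ENNReal.ofReal (-U 1)) ∂μ := lintegral_mono fun ω => by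
        rw [← EReal.coe_neg, erealPos_coe]
        refine le_trans ?_ ENNReal.ofReal_add_le
        refine ENNReal.ofReal_le_ofReal ?_
        have := le_conj hU one_pos (hZpos ω)
        rw [one_mul] at this ⊢
        linarith
    _ = 1 + ENNReal.ofReal (-U 1) := by
        rw [lintegral_add_right _ measurable_const, lintegral_density hZpos hZint hZexp]; simp
    _ < ⊤ := by finiteness

lemma valueFn_lt_top (hU : IsUtility U) {Z : Ω → ℝ} (hZmeas : Measurable Z)
    (hZpos : ∀ ω, 0 < Z ω) (hI : ∫⁻ ω, erealPos ((conj U (1 * Z ω) : ℝ) : EReal) ∂μ < ⊤) :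
    valueFn μ Z (Uext U) 1 < ⊤ := by
  set L := ∫⁻ ω, erealPos ((conj U (1 * Z ω) : ℝ) : EReal) ∂μ with hL
  have hle : valueFn μ Z (Uext U) 1 ≤ ((L + 1 : ℝ≥0∞) : EReal) := by
    refine iSup₂_le fun f hf => (eexp_le _).trans ?_
    obtain ⟨hfm, hf0, hfI⟩ := hf
    rw [EReal.coe_ennreal_le_coe_ennreal_iff]
    calc _ ≤ ∫⁻ ω, (erealPos ((conj U (1 * Z ω) : ℝ) : EReal) + ENNReal.ofReal (Z ω * f ω)) ∂μ :=
          lintegral_mono fun ω => by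
            rw [erealPos_coe, one_mul, mul_comm (Z ω)]
            exact (erealPos_le (Uext_le hU (hf0 ω) (hZpos ω))).trans ENNReal.ofReal_add_le
      _ = L + ∫⁻ ω, ENNReal.ofReal (Z ω * f ω) ∂μ :=
          lintegral_add_right _ (hZmeas.mul hfm).ennreal_ofReal
      _ ≤ _ := by
          gcongr
          simpa using hfI
  refine hle.trans_lt ?_
  rw [lt_top_iff_ne_top]
  exact EReal.coe_ennreal_eq_top_iff.not.2 (by finiteness)

/-- By the doubling property, infiniteness of `E[V(y Z)⁺]` propagates to arbitrarily large `y`. -/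
lemma lintegral_conj_eq_top [IsProbabilityMeasure μ] (hU : IsUtility U) (hE : EAE (conj U) < ⊤)
    {Z : Ω → ℝ} (hZpos : ∀ ω, 0 < Z ω) {y : ℝ} (hy : 0 < y)
    (hI : ∫⁻ ω, ENNReal.ofReal (conj U (y * Z ω)) ∂μ = ⊤) (R : ℝ) :
    ∃ K > R, 0 < K ∧ ∫⁻ ω, ENNReal.ofReal (conj U (K * Z ω)) ∂μ = ⊤ := by
  obtain ⟨y₀, hy₀, ρ, hρ, hd⟩ := exists_doubling hU hE
  have hρ0 : 0 < ρ := by linarith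
  have step : ∀ n : ℕ, ∫⁻ ω, ENNReal.ofReal (conj U (ρ ^ n * y * Z ω)) ∂μ = ⊤ := by
    intro n
    induction n with
    | zero => simpa using hI
    | succ n ih =>
      by_contra hcon
      refine (lt_top_iff_ne_top.1 ?_) ih
      calc _ ≤ ∫⁻ ω, (2 * ENNReal.ofReal (conj U (ρ ^ (n + 1) * y * Z ω)) +
              ENNReal.ofReal (conj U (y₀ / ρ))) ∂μ := lintegral_mono fun ω => by
            have hZ := hZpos ω
            have ht : 0 < ρ ^ (n + 1) * y * Z ω := by positivity
            have he : ρ ^ n * y * Z ω = ρ ^ (n + 1) * y * Z ω / ρ := by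
              rw [pow_succ]; field_simp
            rcases le_total (ρ ^ (n + 1) * y * Z ω) y₀ with h | h
            · refine le_trans ?_ le_self_add
              rw [he, show (2 : ℝ≥0∞) = ENNReal.ofReal 2 by simp,
                ← ENNReal.ofReal_mul (by norm_num)]
              exact ENNReal.ofReal_le_ofReal (hd _ ht h).2
            · refine le_trans ?_ le_add_self
              refine ENNReal.ofReal_le_ofReal ?_
              rw [he]
              exact conj_anti hU (by positivity) (div_le_div_of_nonneg_right h hρ0.le)
        _ = 2 * ∫⁻ ω, ENNReal.ofReal (conj U (ρ ^ (n + 1) * y * Z ω)) ∂μ +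
              ENNReal.ofReal (conj U (y₀ / ρ)) := by
            rw [lintegral_add_right _ measurable_const, lintegral_const_mul' _ _ (by simp)]
            simp
        _ < ⊤ := ENNReal.add_lt_top.2
            ⟨ENNReal.mul_lt_top (by simp) (lt_top_iff_ne_top.2 hcon), ENNReal.ofReal_lt_top⟩
  obtain ⟨n, hn⟩ := pow_unbounded_of_one_lt (R / y) hρ
  rw [div_lt_iff₀ hy] at hn
  exact ⟨ρ ^ n * y, hn, by positivity, step n⟩

/-- If `E[V(K Z)⁺] = ∞`, some `f ∈ C(x)` has expected utility growing linearly in `K`: take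
`f = x / 2 + C h / (K Z)` with `0 ≤ h ≤ V(K Z)⁺` and `E[h]` chosen to exhaust the budget. -/
lemma le_valueFn [IsProbabilityMeasure μ] {Z : Ω → ℝ} (hZmeas : Measurable Z)
    (hZpos : ∀ ω, 0 < Z ω) (hZ1 : ∫⁻ ω, ENNReal.ofReal (Z ω) ∂μ = 1)
    {x C B K : ℝ} (hx : 0 < x) (hC : 0 < C) (hB : 0 ≤ B) (hK : 0 < K)
    (hbd : ∀ y h, 0 < y → 0 ≤ h → h ≤ max (conj U y) 0 →
      -B ≤ U (x / 2 + C * h / y) ∧ h / 2 - B ≤ U (x / 2 + C * h / y))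
    (hI : ∫⁻ ω, ENNReal.ofReal (conj U (K * Z ω)) ∂μ = ⊤) :
    ((K * x / (4 * C) - 2 * B : ℝ) : EReal) ≤ valueFn μ Z (Uext U) x := by
  set T := K * x / (2 * C) with hT
  have hT0 : 0 < T := by positivity
  obtain ⟨g, hg, hgt, hgT⟩ := exists_lt_lintegral_simpleFunc_of_lt_lintegral (μ := μ)
    (f := fun ω => (conj U (K * Z ω)).toNNReal) (L := ENNReal.ofReal T) (by
      change _ < ∫⁻ ω, ENNReal.ofReal (conj U (K * Z ω)) ∂μ
      rw [hI]; exact ENNReal.ofReal_lt_top)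
  set G := (∫⁻ ω, (g ω : ℝ≥0∞) ∂μ).toReal with hG
  have hGe : ∫⁻ ω, (g ω : ℝ≥0∞) ∂μ = ENNReal.ofReal G := (ENNReal.ofReal_toReal hgt.ne).symm
  have hTG : T < G := (ENNReal.ofReal_lt_iff_lt_toReal hT0.le hgt.ne).1 hgT
  have hG0 : 0 < G := hT0.trans hTG
  have hint : ∀ c : ℝ, 0 ≤ c →
      ∫⁻ ω, ENNReal.ofReal (c * (g ω : ℝ)) ∂μ = ENNReal.ofReal (c * G) := by
    intro c hc
    simp_rw [ENNReal.ofReal_mul hc, ENNReal.ofReal_coe_nnreal]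
    rw [lintegral_const_mul' _ _ ENNReal.ofReal_ne_top, hGe]
  have hgm : Measurable fun ω => (g ω : ℝ) := g.measurable.coe_nnreal_real
  have hh : ∀ ω, T / G * (g ω : ℝ) ≤ max (conj U (K * Z ω)) 0 := fun ω => by
    have h1 : (g ω : ℝ) ≤ max (conj U (K * Z ω)) 0 := by
      have := NNReal.coe_le_coe.2 (hg ω)
      rwa [Real.coe_toNNReal'] at this
    have h2 : T / G * (g ω : ℝ) ≤ g ω :=
      mul_le_of_le_one_left (g ω).coe_nonneg ((div_le_one hG0).2 hTG.le)
    exact h2.trans h1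
  have hpos : ∀ ω, 0 < x / 2 + C * (T / G * (g ω : ℝ)) / (K * Z ω) := fun ω => by
    have := hZpos ω
    positivity
  have hf : (fun ω => x / 2 + C * (T / G * (g ω : ℝ)) / (K * Z ω)) ∈ Cset μ Z x := by
    refine ⟨by fun_prop, fun ω => (hpos ω).le, ?_⟩
    have e : ∀ ω, ENNReal.ofReal (Z ω * (x / 2 + C * (T / G * (g ω : ℝ)) / (K * Z ω))) =
        ENNReal.ofReal (x / 2) * ENNReal.ofReal (Z ω) +
          ENNReal.ofReal (C * (T / G) / K * (g ω : ℝ)) := fun ω => by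
      have := hZpos ω
      rw [← ENNReal.ofReal_mul (by positivity), ← ENNReal.ofReal_add (by positivity)
        (by positivity)]
      congr 1
      field_simp
    simp_rw [e]
    rw [lintegral_add_left (by fun_prop), lintegral_const_mul' _ _ ENNReal.ofReal_ne_top, hZ1,
      mul_one, hint _ (by positivity), ← ENNReal.ofReal_add (by positivity) (by positivity)]
    refine ENNReal.ofReal_le_ofReal (le_of_eq ?_)
    rw [hT]
    field_simp
    ring
  refine le_trans ?_ (le_iSup₂ (f := fun f (_ : f ∈ Cset μ Z x) =>
    eexp μ (fun ω => Uext U (f ω))) _ hf)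
  have hUe : (fun ω => Uext U (x / 2 + C * (T / G * (g ω : ℝ)) / (K * Z ω))) =
      fun ω => ((U (x / 2 + C * (T / G * (g ω : ℝ)) / (K * Z ω)) : ℝ) : EReal) := by
    funext ω
    simp only [Uext, hpos ω, if_true]
  rw [hUe]
  have key := fun ω => hbd (K * Z ω) (T / G * (g ω : ℝ)) (mul_pos hK (hZpos ω))
    (by positivity) (hh ω)
  refine le_eexp (h := fun ω => T / G * (g ω : ℝ)) hB (by positivity) (fun ω => (key ω).1)
    (fun ω => (key ω).2) ?_
  have e : ∀ ω, T / G * (g ω : ℝ) / 2 = T / G / 2 * (g ω : ℝ) := fun ω => by ring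
  simp_rw [e]
  rw [hint _ (by positivity), hT]
  congr 1
  field_simp
  norm_num

end DualValue

/-- Under `EAE(V) < ∞`, the condition `E[V(y Z)] < ∞` for every `y > 0` holds iff
`u(x, U) < ∞` for some `x > 0`. -/
theorem dual_integrability_iff_value_finite
    {Ω : Type*} [MeasurableSpace Ω] (μ : MeasureTheory.Measure Ω)
    [MeasureTheory.IsProbabilityMeasure μ]
    (Z : Ω → ℝ) (hZmeas : Measurable Z) (hZpos : ∀ ω, 0 < Z ω)
    (hZint : MeasureTheory.Integrable Z μ) (hZexp : ∫ ω, Z ω ∂μ = 1)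
    (U : ℝ → ℝ) (hU : IsUtility U) (hEAE : EAE (conj U) < ⊤) :
    (∀ y : ℝ, 0 < y → eexp μ (fun ω => ((conj U (y * Z ω) : ℝ) : EReal)) < ⊤) ↔
      ∃ x : ℝ, 0 < x ∧ valueFn μ Z (Uext U) x < ⊤ := by
  constructor
  · intro h
    exact ⟨1, one_pos, DualValue.valueFn_lt_top hU hZmeas hZpos
      (DualValue.lintegral_lt_top_of_eexp
        (DualValue.neg_conj_lt_top hU hZpos hZint hZexp) (h 1 one_pos))⟩
  · rintro ⟨x, hx, hfin⟩ y hy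
    apply DualValue.eexp_lt_top_of
    simp_rw [DualValue.erealPos_coe]
    by_contra hcon
    rw [not_lt, top_le_iff] at hcon
    obtain ⟨C, hC, hCB⟩ := DualValue.exists_U_bound hU hEAE
    obtain ⟨B, hB, hbd⟩ := hCB (x / 2) (by positivity)
    obtain ⟨R, hR, -⟩ := EReal.lt_iff_exists_real_btwn.1 hfin
    obtain ⟨K, hKR, hK, hI⟩ := DualValue.lintegral_conj_eq_top hU hEAE hZpos hy hcon
      ((R + 2 * B) * (4 * C) / x)
    have h1 := (DualValue.le_valueFn hZmeas hZpos (DualValue.lintegral_density hZpos hZint hZexp)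
      hx hC hB hK hbd hI).trans_lt hR
    rw [EReal.coe_lt_coe_iff] at h1
    rw [gt_iff_lt, div_lt_iff₀ hx, ← lt_div_iff₀ (by positivity)] at hKR
    linarith
end

section
/- Suppose E[V(y Z)] < ∞ for every y > 0, where V is the convex conjugate of the utility function U. Then for every x₀ ∈ (0, ∞) there exists f̂ ∈ C(x₀) such that u(x₀, U) = E[U(f̂)]; i.e. the non-concave utility maximization problem admits an optimizer. -/
/-!
The utility is not concave, so convex combinations of a maximising sequence are of no use.
Instead the probability space is split into countably many atoms and an atomless remainder
(`exists_preAtoms`), and each part is treated by its own method.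

On the atoms a payoff is a sequence of constants, each bounded by the budget, so a diagonal
subsequence of a maximising sequence converges almost surely there (`exists_subseq_atoms`). Expected
utility is upper semicontinuous along such a sequence (`finiteUtility_of_tendsto`): the dual gap
`V(yZ) + yZf − U(f)` is nonnegative, so Fatou's lemma applies to it with a loss of at most `y` times
the budget, and since `V(yZ)` is integrable for every `y > 0` one may let `y → 0`.

On the atomless part one passes to the Lagrangian. For `y > 0` the function `t ↦ U(t) − yZt` attains
its maximum. At the critical multiplier `y` the limit of maximisers for larger multipliers costs at
most the available budget, and the limit of maximisers for smaller ones at least as much. By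
Sierpiński's theorem (`IsAtomless.exists_measure_eq`) switching from one to the other on a suitable set meets the budget
exactly (`exists_between`, `exists_multiplier`); if no positive multiplier exhausts the budget, `U`
attains its supremum at an affordable constant (`exists_satiation`). A Lagrangian maximiser bounds the
utility of every other payoff up to `y` times the difference of costs (`integral_le_of_isArgMax`).

In `exists_dominating` the subsequence is refined so that the share of the budget spent on the
atomless part converges to some `ξ`. If `ξ = 0`, a further subsequence converges to zero there;
if `ξ > 0`, the payoffs there are replaced by the Lagrangian maximiser for the budget `ξ`.
The result dominates the limit of the maximising sequence.
-/
open MeasureTheory Filter Set Topology ENNReal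

namespace NonconcaveUtility

/-! ### The extended utility and its pointwise maximisers -/

section Utility

lemma Uext_pos (U : ℝ → ℝ) {t : ℝ} (ht : 0 < t) : Uext U t = (U t : EReal) := by
  simp [Uext, ht]

lemma Uext_zero (U : ℝ → ℝ) :
    Uext U 0 = ⨅ z : {z : ℝ // 0 < z}, ((U z.1 : ℝ) : EReal) := by
  simp [Uext]

lemma Uext_neg (U : ℝ → ℝ) {t : ℝ} (ht : t < 0) : Uext U t = ⊥ := by
  simp [Uext, ht.ne, not_lt.2 ht.le]

lemma Uext_zero_le (U : ℝ → ℝ) {t : ℝ} (ht : 0 < t) : Uext U 0 ≤ (U t : EReal) := by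
  rw [Uext_zero]
  exact iInf_le (fun z : {z : ℝ // 0 < z} => ((U z.1 : ℝ) : EReal)) ⟨t, ht⟩

lemma Uext_ne_top (U : ℝ → ℝ) (t : ℝ) : Uext U t ≠ ⊤ := by
  rcases lt_trichotomy t 0 with h | h | h
  · simp [Uext_neg U h]
  · subst h
    exact ne_top_of_le_ne_top (EReal.coe_ne_top _) (Uext_zero_le U one_pos)
  · simp [Uext_pos U h]

variable {U : ℝ → ℝ}

lemma Uext_mono (hU : IsUtility U) : Monotone (Uext U) := by
  intro s t hst
  rcases lt_trichotomy s 0 with h | h | h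
  · simp [Uext_neg U h]
  · subst h
    rcases hst.eq_or_lt with h | h
    · rw [← h]
    · rw [Uext_pos U h]
      exact Uext_zero_le U h
  · rw [Uext_pos U h, Uext_pos U (h.trans_le hst)]
    exact_mod_cast hU.mono h hst

/-- The extension of `U` is upper semicontinuous along nonnegative sequences. The value
`U(0) = inf U` is what makes this true at the origin. -/
lemma eventually_lt (hU : IsUtility U) {t : ℕ → ℝ} {t₀ b : ℝ} (ht : ∀ n, 0 ≤ t n)
    (hlim : Tendsto t atTop (𝓝 t₀)) (hb : Uext U t₀ < (b : EReal)) :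
    ∀ᶠ n in atTop, Uext U (t n) < (b : EReal) := by
  have ht0 : 0 ≤ t₀ := ge_of_tendsto' hlim ht
  rcases ht0.eq_or_lt with h | h
  · subst h
    rw [Uext_zero, iInf_lt_iff] at hb
    obtain ⟨⟨z, hz⟩, hzb⟩ := hb
    filter_upwards [hlim.eventually (gt_mem_nhds hz)] with n hn
    refine lt_of_le_of_lt (Uext_mono hU hn.le) ?_
    rwa [Uext_pos U hz]
  · rw [Uext_pos U h, EReal.coe_lt_coe_iff] at hb
    have h1 := hU.usc t₀ h b hb
    have h2 : Tendsto t atTop (𝓝[Set.Ioi 0] t₀) :=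
      tendsto_nhdsWithin_iff.2 ⟨hlim, hlim.eventually (lt_mem_nhds h)⟩
    filter_upwards [h2.eventually h1, hlim.eventually (lt_mem_nhds h)] with n hn hn'
    rw [Uext_pos U hn']
    exact_mod_cast hn

lemma le_Uext_of_tendsto (hU : IsUtility U) {t a : ℕ → ℝ} {t₀ a₀ : ℝ} (ht : ∀ n, 0 ≤ t n)
    (hlim : Tendsto t atTop (𝓝 t₀)) (ha : Tendsto a atTop (𝓝 a₀))
    (hle : ∀ n, (a n : EReal) ≤ Uext U (t n)) : (a₀ : EReal) ≤ Uext U t₀ := by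
  by_contra hcon
  rw [not_le] at hcon
  obtain ⟨b, hb1, hb2⟩ := EReal.lt_iff_exists_real_btwn.1 hcon
  have hb2' : b < a₀ := by exact_mod_cast hb2
  obtain ⟨n, hn1, hn2⟩ :=
    ((eventually_lt hU ht hlim hb1).and (ha.eventually (lt_mem_nhds hb2'))).exists
  have h3 : (b : EReal) < (a n : EReal) := by exact_mod_cast hn2
  exact absurd (hle n) (not_le.2 (hn1.trans h3))

lemma exists_bound (hU : IsUtility U) {y : ℝ} (hy : 0 < y) :
    ∃ M : ℝ, ∀ x, 0 < x → U x - x * y ≤ M := by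
  have h1 := hU.growth.eventually (gt_mem_nhds hy)
  obtain ⟨N, hN⟩ := eventually_atTop.1 h1
  have hN1 : 0 < max N 1 := lt_max_of_lt_right one_pos
  refine ⟨max 0 (U (max N 1)), fun x hx => ?_⟩
  rcases le_total x (max N 1) with h | h
  · have := hU.mono hx h
    have h2 : 0 ≤ x * y := by positivity
    exact le_max_of_le_right (by linarith)
  · have h2 := hN x ((le_max_left _ _).trans h)
    rw [div_lt_iff₀ hx] at h2
    exact le_max_of_le_left (by linarith)

lemma le_conj (hU : IsUtility U) {y x : ℝ} (hy : 0 < y) (hx : 0 < x) :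
    U x - x * y ≤ conj U y := by
  obtain ⟨M, hM⟩ := exists_bound hU hy
  refine le_csSup ⟨M, ?_⟩ ⟨x, hx, rfl⟩
  rintro _ ⟨z, hz, rfl⟩
  exact hM z hz

lemma conj_le {y M : ℝ} (h : ∀ x, 0 < x → U x - x * y ≤ M) : conj U y ≤ M := by
  refine csSup_le ⟨_, ⟨1, Set.mem_Ioi.2 one_pos, rfl⟩⟩ ?_
  rintro _ ⟨z, hz, rfl⟩
  exact h z hz

lemma conj_anti (hU : IsUtility U) {y z : ℝ} (hy : 0 < y) (hyz : y ≤ z) :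
    conj U z ≤ conj U y := by
  refine conj_le fun x hx => ?_
  have h1 := le_conj hU hy hx
  have h2 : x * y ≤ x * z := mul_le_mul_of_nonneg_left hyz hx.le
  linarith

/-- Fenchel's inequality, valid also at `t = 0`. -/
lemma le_conj_of_le (hU : IsUtility U) {y t w : ℝ} (hy : 0 < y) (ht : 0 ≤ t)
    (hw : (w : EReal) ≤ Uext U t) : w ≤ conj U y + y * t := by
  rcases ht.eq_or_lt with h | h
  · subst h
    refine le_of_forall_pos_le_add fun ε hε => ?_
    have h1 := hw.trans (Uext_zero_le U (div_pos hε hy))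
    have h2 : w ≤ U (ε / y) := by exact_mod_cast h1
    have h3 := le_conj hU hy (div_pos hε hy)
    rw [div_mul_cancel₀ _ hy.ne'] at h3
    linarith
  · rw [Uext_pos U h] at hw
    have h2 : w ≤ U t := by exact_mod_cast hw
    have h3 := le_conj hU hy h
    linarith [mul_comm t y]

/-- `IsArgMax U c t` says that `t` maximises `t ↦ U(t) − c t` over `[0,∞)`. It is expressed by
inequalities that do not mention the conjugate, so that `c = 0` is meaningful as well. -/
def IsArgMax (U : ℝ → ℝ) (c t : ℝ) : Prop :=
  0 ≤ t ∧ ∀ s, 0 < s → ((U s + c * (t - s) : ℝ) : EReal) ≤ Uext U t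

lemma IsArgMax.ne_bot {c t : ℝ} (h : IsArgMax U c t) : Uext U t ≠ ⊥ :=
  ne_bot_of_le_ne_bot (EReal.coe_ne_bot _) (h.2 1 one_pos)

lemma coe_toReal_Uext {t : ℝ} (h : Uext U t ≠ ⊥) :
    (((Uext U t).toReal : ℝ) : EReal) = Uext U t :=
  EReal.coe_toReal (Uext_ne_top U t) h

lemma IsArgMax.le {c t s w : ℝ} (h : IsArgMax U c t) (hs : 0 ≤ s)
    (hw : (w : EReal) ≤ Uext U s) : w + c * (t - s) ≤ (Uext U t).toReal := by
  have key : ∀ r, 0 < r → U r + c * (t - r) ≤ (Uext U t).toReal := fun r hr => by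
    have := h.2 r hr
    rw [← coe_toReal_Uext h.ne_bot] at this
    exact_mod_cast this
  rcases hs.eq_or_lt with h0 | h0
  · subst h0
    have h1 : ∀ r, 0 < r → w + c * (t - r) ≤ (Uext U t).toReal := fun r hr => by
      have h2 : w ≤ U r := by exact_mod_cast hw.trans (Uext_zero_le U hr)
      linarith [key r hr]
    have h2 : Tendsto (fun r : ℝ => w + c * (t - r)) (𝓝[>] 0) (𝓝 (w + c * (t - 0))) :=
      tendsto_nhdsWithin_of_tendsto_nhds (by
        exact (by fun_prop : Continuous fun r : ℝ => w + c * (t - r)).tendsto 0)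
    refine le_of_tendsto h2 ?_
    filter_upwards [self_mem_nhdsWithin] with r hr using h1 r hr
  · rw [Uext_pos U h0] at hw
    have h2 : w ≤ U s := by exact_mod_cast hw
    linarith [key s h0]

lemma IsArgMax.anti {c c' t t' : ℝ} (h : IsArgMax U c t) (h' : IsArgMax U c' t')
    (hc : c < c') : t' ≤ t := by
  have h1 := h.le h'.1 (coe_toReal_Uext h'.ne_bot).le
  have h2 := h'.le h.1 (coe_toReal_Uext h.ne_bot).le
  nlinarith

lemma IsArgMax.toReal_eq (hU : IsUtility U) {c t : ℝ} (hc : 0 < c) (h : IsArgMax U c t) :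
    (Uext U t).toReal = conj U c + c * t := by
  apply le_antisymm
  · exact le_conj_of_le hU hc h.1 (coe_toReal_Uext h.ne_bot).le
  · have : conj U c ≤ (Uext U t).toReal - c * t := conj_le fun x hx => by
      have := h.le hx.le (Uext_pos U hx).ge
      linarith
    linarith

lemma IsArgMax.mul_le (hU : IsUtility U) {c t : ℝ} (hc : 0 < c) (h : IsArgMax U c t) :
    c / 2 * t ≤ conj U (c / 2) - conj U c := by
  have h1 := h.toReal_eq hU hc
  have h2 := le_conj_of_le hU (half_pos hc) h.1 (coe_toReal_Uext h.ne_bot).le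
  linarith

/-- The graph of `IsArgMax U` is closed. -/
lemma IsArgMax.closed (hU : IsUtility U) {c t : ℕ → ℝ} {c₀ t₀ : ℝ}
    (h : ∀ n, IsArgMax U (c n) (t n)) (hc : Tendsto c atTop (𝓝 c₀))
    (ht : Tendsto t atTop (𝓝 t₀)) : IsArgMax U c₀ t₀ := by
  refine ⟨ge_of_tendsto' ht fun n => (h n).1, fun s hs => ?_⟩
  refine le_Uext_of_tendsto hU (fun n => (h n).1) ht ?_ (fun n => (h n).2 s hs)
  exact tendsto_const_nhds.add (hc.mul (ht.sub tendsto_const_nhds))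

lemma IsArgMax.exists (hU : IsUtility U) {c : ℝ} (hc : 0 < c) : ∃ t, IsArgMax U c t := by
  obtain ⟨M, hM⟩ := exists_bound hU hc
  have hb : BddAbove ((fun x => U x - x * c) '' Set.Ioi (0 : ℝ)) := by
    refine ⟨M, ?_⟩
    rintro _ ⟨z, hz, rfl⟩
    exact hM z hz
  obtain ⟨v, -, hv, hmem⟩ := exists_seq_tendsto_sSup (⟨_, ⟨1, Set.mem_Ioi.2 one_pos, rfl⟩⟩ :
    ((fun x => U x - x * c) '' Set.Ioi (0 : ℝ)).Nonempty) hb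
  choose t ht htv using hmem
  simp only [Set.mem_Ioi] at ht
  -- the maximising sequence `t` is bounded because `U` is dominated by the line of slope `c / 2`
  obtain ⟨m, hm⟩ := hv.bddBelow_range
  have hbd : ∀ n, t n ∈ Set.Icc 0 ((conj U (c / 2) - m) / (c / 2)) := fun n => by
    refine ⟨(ht n).le, ?_⟩
    rw [le_div_iff₀ (half_pos hc)]
    have h1 := le_conj hU (half_pos hc) (ht n)
    have h2 : m ≤ v n := hm ⟨n, rfl⟩
    have h3 : U (t n) - t n * c = v n := htv n
    linarith
  obtain ⟨t₀, -, φ, hφ, hlim⟩ := isCompact_Icc.tendsto_subseq hbd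
  refine ⟨t₀, ge_of_tendsto' hlim fun n => (ht _).le, fun s hs => ?_⟩
  have hle : U s - s * c ≤ conj U c := le_conj hU hc hs
  have h1 : ((conj U c + t₀ * c : ℝ) : EReal) ≤ Uext U t₀ := by
    refine le_Uext_of_tendsto hU (t := t ∘ φ) (a := fun n => v (φ n) + t (φ n) * c)
      (fun n => (ht _).le) hlim ?_ fun n => ?_
    · exact (hv.comp hφ.tendsto_atTop).add (hlim.mul_const c)
    · have h3 : U (t (φ n)) - t (φ n) * c = v (φ n) := htv (φ n)
      rw [Function.comp, Uext_pos U (ht _)]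
      exact_mod_cast (by linarith : v (φ n) + t (φ n) * c ≤ U (t (φ n)))
  refine le_trans ?_ h1
  exact_mod_cast (by linarith : U s + c * (t₀ - s) ≤ conj U c + t₀ * c)

/-- A selection of the maximisers of `t ↦ U(t) − c t` (junk value `0` if there are none). -/
noncomputable def sel (U : ℝ → ℝ) (c : ℝ) : ℝ :=
  open Classical in if h : ∃ t, IsArgMax U c t then h.choose else 0

lemma sel_mem (hU : IsUtility U) {c : ℝ} (hc : 0 < c) : IsArgMax U c (sel U c) := by
  have h := IsArgMax.exists hU hc
  rw [sel, dif_pos h]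
  exact h.choose_spec

lemma sel_anti (hU : IsUtility U) {c c' : ℝ} (hc : 0 < c) (h : c ≤ c') :
    sel U c' ≤ sel U c := by
  rcases h.eq_or_lt with h | h
  · rw [h]
  · exact (sel_mem hU hc).anti (sel_mem hU (hc.trans h)) h

lemma sel_nonneg (hU : IsUtility U) {c : ℝ} (hc : 0 < c) : 0 ≤ sel U c := (sel_mem hU hc).1

lemma tendsto_sel (hU : IsUtility U) : Tendsto (sel U) atTop (𝓝 0) := by
  rw [tendsto_order]
  refine ⟨fun a ha => ?_, fun a ha => ?_⟩
  · filter_upwards [eventually_gt_atTop 0] with c hc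
    exact ha.trans_le (sel_nonneg hU hc)
  · -- compare the maximiser with the competitor `a / 2`
    have h0 : Tendsto (fun c : ℝ => (U (max (sel U 1) 1) - U (a / 2)) / c) atTop (𝓝 0) :=
      tendsto_const_nhds.div_atTop tendsto_id
    filter_upwards [eventually_ge_atTop 1, h0.eventually (gt_mem_nhds (half_pos ha))] with c hc h1
    have hc0 : 0 < c := by linarith
    have hm := sel_mem hU hc0
    have h2 := hm.le (half_pos ha).le (Uext_pos U (half_pos ha)).ge
    have h3 : Uext U (sel U c) ≤ (U (max (sel U 1) 1) : EReal) := by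
      rw [← Uext_pos U (lt_max_of_lt_right one_pos)]
      exact Uext_mono hU ((sel_anti hU one_pos hc).trans (le_max_left _ _))
    rw [← coe_toReal_Uext hm.ne_bot, EReal.coe_le_coe_iff] at h3
    rw [div_lt_iff₀ hc0] at h1
    by_contra hcon
    rw [not_lt] at hcon
    nlinarith

end Utility

/-! ### Atoms and atomless sets -/

section Atoms

variable {Ω : Type*} [MeasurableSpace Ω]

/-- A measurable set that cannot be split into two parts of positive measure: an atom or a
null set. Null sets are admitted so that every countable family of atoms can be indexed
by `ℕ`. -/
def IsPreAtom (μ : Measure Ω) (A : Set Ω) : Prop :=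
  MeasurableSet A ∧ ∀ B ⊆ A, MeasurableSet B → μ B = 0 ∨ μ (A \ B) = 0

/-- Every measurable subset of `A` of positive measure splits into two parts of positive
measure. -/
def IsAtomless (μ : Measure Ω) (A : Set Ω) : Prop :=
  ∀ E ⊆ A, MeasurableSet E → μ E ≠ 0 → ∃ B ⊆ E, MeasurableSet B ∧ μ B ≠ 0 ∧ μ (E \ B) ≠ 0

/-- Exhaustion: some countable union of atoms has maximal measure, and its complement is then
atomless. -/
lemma exists_preAtoms (μ : Measure Ω) [IsFiniteMeasure μ] :
    ∃ a : ℕ → Set Ω, (∀ n, IsPreAtom μ (a n)) ∧ IsAtomless μ (⋃ n, a n)ᶜ := by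
  let S : Set ℝ≥0∞ := {r | ∃ a : ℕ → Set Ω, (∀ n, IsPreAtom μ (a n)) ∧ μ (⋃ n, a n) = r}
  have hempty : IsPreAtom μ ∅ := ⟨MeasurableSet.empty, fun B hB _ => Or.inl (by
    rw [Set.subset_empty_iff.1 hB, measure_empty])⟩
  have hS : S.Nonempty := ⟨_, fun _ => ∅, fun _ => hempty, rfl⟩
  obtain ⟨u, -, hu, hmem⟩ := exists_seq_tendsto_sSup hS (OrderTop.bddAbove S)
  choose a ha hau using hmem
  refine ⟨fun n => a n.unpair.1 n.unpair.2, fun n => ha _ _, ?_⟩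
  set T := ⋃ n : ℕ, a n.unpair.1 n.unpair.2 with hT
  have hTmax : sSup S ≤ μ T := by
    refine le_of_tendsto' hu fun k => ?_
    rw [← hau k]
    refine measure_mono (Set.iUnion_subset fun j => ?_)
    have := Set.subset_iUnion (fun n : ℕ => a n.unpair.1 n.unpair.2) (Nat.pair k j)
    simpa using this
  intro E hE hEm hE0
  by_contra hcon
  push Not at hcon
  have hEatom : IsPreAtom μ E := ⟨hEm, fun B hB hBm => or_iff_not_imp_left.2 (hcon B hB hBm)⟩
  -- adjoining `E` to the family would exceed the maximal measure
  let a' : ℕ → Set Ω := fun n => Nat.casesOn n E fun n => a n.unpair.1 n.unpair.2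
  have ha' : ∀ n, IsPreAtom μ (a' n) := by
    rintro (_ | n)
    · exact hEatom
    · exact ha _ _
  have hsub : E ∪ T ⊆ ⋃ n, a' n := by
    refine Set.union_subset (Set.subset_iUnion a' 0) (Set.iUnion_subset fun n => ?_)
    exact Set.subset_iUnion a' (n + 1)
  have hdis : Disjoint E T := Set.disjoint_left.2 fun x hx hx' => hE hx hx'
  have h1 : μ E + μ T ≤ μ T := by
    rw [← measure_union' hdis hEm]
    have hm : μ (⋃ n, a' n) ∈ S := ⟨a', ha', rfl⟩
    exact (measure_mono hsub).trans ((le_sSup hm).trans hTmax)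
  have h2 : μ T < μ E + μ T := by
    rw [add_comm]
    exact ENNReal.lt_add_right (measure_ne_top _ _) hE0
  exact absurd h1 (not_le.2 h2)

lemma IsPreAtom.ae_const {μ : Measure Ω} {A : Set Ω} (hA : IsPreAtom μ A) {f : Ω → ℝ}
    (hf : Measurable f) : ∃ c : ℝ, ∀ᵐ ω ∂μ.restrict A, f ω = c := by
  refine exists_eventuallyEq_const_of_forall_separating (l := ae (μ.restrict A)) MeasurableSet
    fun V hV => ?_
  rcases hA.2 (A ∩ f ⁻¹' V) Set.inter_subset_left (hA.1.inter (hf hV)) with h | h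
  · right
    rw [ae_restrict_iff' hA.1, ae_iff]
    convert h using 2
    ext ω
    simp
  · left
    rw [ae_restrict_iff' hA.1, ae_iff]
    convert h using 2
    ext ω
    simp

lemma IsAtomless.exists_small {ν : Measure Ω} [IsFiniteMeasure ν] (h : IsAtomless ν Set.univ)
    {E : Set Ω} (hE : MeasurableSet E) (hE0 : ν E ≠ 0) {ε : ℝ≥0∞} (hε : ε ≠ 0) :
    ∃ B ⊆ E, MeasurableSet B ∧ ν B ≠ 0 ∧ ν B ≤ ε := by
  have key : ∀ n : ℕ, ∃ B ⊆ E, MeasurableSet B ∧ ν B ≠ 0 ∧ 2 ^ n * ν B ≤ ν E := by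
    intro n
    induction n with
    | zero => exact ⟨E, subset_rfl, hE, hE0, by simp⟩
    | succ n ih =>
      obtain ⟨B, hBE, hBm, hB0, hB⟩ := ih
      obtain ⟨C, hCB, hCm, hC0, hC1⟩ := h B (Set.subset_univ _) hBm hB0
      have hsum : ν C + ν (B \ C) = ν B := by
        have := measure_inter_add_sdiff (μ := ν) B hCm
        rwa [Set.inter_eq_self_of_subset_right hCB] at this
      rcases le_total (ν C) (ν (B \ C)) with hle | hle
      · refine ⟨C, hCB.trans hBE, hCm, hC0, le_trans ?_ hB⟩
        rw [pow_succ, mul_assoc, two_mul, ← hsum]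
        gcongr
      · refine ⟨B \ C, Set.sdiff_subset.trans hBE, hBm.diff hCm, hC1, le_trans ?_ hB⟩
        rw [pow_succ, mul_assoc, two_mul, ← hsum]
        gcongr
  obtain ⟨n, hn⟩ : ∃ n : ℕ, ν E < n * ε := ENNReal.exists_nat_mul_gt hε (measure_ne_top _ _)
  obtain ⟨B, hBE, hBm, hB0, hB⟩ := key n
  refine ⟨B, hBE, hBm, hB0, ?_⟩
  by_contra hcon
  rw [not_le] at hcon
  have h2 : (n : ℝ≥0∞) ≤ 2 ^ n := by exact_mod_cast (Nat.lt_two_pow_self (n := n)).le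
  have : (n : ℝ≥0∞) * ε ≤ 2 ^ n * ν B := by gcongr
  exact absurd (this.trans hB) (not_le.2 hn)

/-- Sierpiński's theorem: an atomless finite measure takes every value below its total mass.
The set is built greedily, each step adding at least half of what could still be added. -/
lemma IsAtomless.exists_measure_eq {ν : Measure Ω} [IsFiniteMeasure ν]
    (h : IsAtomless ν Set.univ) {t : ℝ≥0∞} (ht : t ≤ ν Set.univ) :
    ∃ B, MeasurableSet B ∧ ν B = t := by
  have httop : t ≠ ∞ := ne_top_of_le_ne_top (measure_ne_top _ _) ht
  let X := {B : Set Ω // MeasurableSet B ∧ ν B ≤ t}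
  have step : ∀ B : X, ∃ C : X, B.1 ⊆ C.1 ∧
      ∀ E, MeasurableSet E → Disjoint B.1 E → ν B.1 + ν E ≤ t → ν B.1 + ν E / 2 ≤ ν C.1 := by
    rintro ⟨B, hBm, hBt⟩
    let S : Set ℝ≥0∞ := {r | ∃ E, MeasurableSet E ∧ Disjoint B E ∧ ν B + ν E ≤ t ∧ ν E = r}
    by_cases hS : sSup S = 0
    · refine ⟨⟨B, hBm, hBt⟩, subset_rfl, fun E hE hd hle => ?_⟩
      have : ν E = 0 := le_antisymm (hS ▸ le_sSup ⟨E, hE, hd, hle, rfl⟩) bot_le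
      simp [this]
    · have hfin : sSup S ≠ ∞ := by
        refine ne_top_of_le_ne_top (measure_ne_top ν Set.univ) (sSup_le ?_)
        rintro _ ⟨E, -, -, -, rfl⟩
        exact measure_mono (Set.subset_univ _)
      obtain ⟨_, ⟨E, hE, hd, hle, rfl⟩, hlt⟩ := lt_sSup_iff.1 (ENNReal.half_lt_self hS hfin)
      have hu : ν (B ∪ E) = ν B + ν E := measure_union hd hE
      refine ⟨⟨B ∪ E, hBm.union hE, hu ▸ hle⟩, Set.subset_union_left, fun F hF hd' hle' => ?_⟩
      change _ ≤ ν (B ∪ E)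
      rw [hu]
      gcongr
      refine le_trans ?_ hlt.le
      gcongr
      exact le_sSup ⟨F, hF, hd', hle', rfl⟩
  choose g hg1 hg2 using step
  let b : ℕ → X := fun n => Nat.rec ⟨∅, MeasurableSet.empty, by simp⟩ (fun _ B => g B) n
  have hbmono : Monotone fun n => (b n).1 := monotone_nat_of_le_succ fun n => hg1 (b n)
  have hBm : MeasurableSet (⋃ n, (b n).1) := MeasurableSet.iUnion fun n => (b n).2.1
  have hBt : ν (⋃ n, (b n).1) ≤ t := by
    rw [hbmono.measure_iUnion]
    exact iSup_le fun n => (b n).2.2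
  refine ⟨_, hBm, le_antisymm hBt ?_⟩
  by_contra hcon
  rw [not_le] at hcon
  have hc0 : ν (⋃ n, (b n).1)ᶜ ≠ 0 := by
    intro h0
    have := measure_add_measure_compl (μ := ν) hBm
    rw [h0, add_zero] at this
    exact absurd (this ▸ ht) (not_le.2 hcon)
  obtain ⟨E, hEs, hEm, hE0, hEle⟩ := h.exists_small hBm.compl hc0 (tsub_pos_of_lt hcon).ne'
  have hgrow : ∀ n : ℕ, n * (ν E / 2) ≤ ν (b n).1 := by
    intro n
    induction n with
    | zero => simp
    | succ n ih =>
      have hd : Disjoint (b n).1 E := Set.disjoint_left.2 fun x hx hx' =>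
        hEs hx' (Set.mem_iUnion.2 ⟨n, hx⟩)
      have hle : ν (b n).1 + ν E ≤ t := by
        have h1 : ν (b n).1 ≤ ν (⋃ n, (b n).1) :=
          measure_mono (Set.subset_iUnion (fun n => (b n).1) n)
        calc ν (b n).1 + ν E ≤ ν (⋃ n, (b n).1) + (t - ν (⋃ n, (b n).1)) := by gcongr
          _ = t := add_tsub_cancel_of_le hBt
      refine le_trans ?_ (hg2 (b n) E hEm hd hle)
      push_cast
      rw [add_mul, one_mul]
      gcongr
  have hE2 : ν E / 2 ≠ 0 := by simpa using hE0
  obtain ⟨n, hn⟩ := ENNReal.exists_nat_mul_gt hE2 httop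
  exact absurd ((hgrow n).trans (b n).2.2) (not_le.2 hn)

end Atoms

/-- A function that is antitone on `(0,∞)` becomes antitone on `ℝ` in logarithmic coordinates,
hence is measurable there. -/
lemma measurable_comp_of_anti {Ω : Type*} [MeasurableSpace Ω] {F : ℝ → ℝ}
    (hF : ∀ x y, 0 < x → x ≤ y → F y ≤ F x) {g : Ω → ℝ} (hg : Measurable g)
    (hpos : ∀ ω, 0 < g ω) : Measurable fun ω => F (g ω) := by
  have h1 : Antitone fun s => F (Real.exp s) := fun s t hst =>
    hF _ _ (Real.exp_pos s) (Real.exp_le_exp.2 hst)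
  have h2 := h1.measurable.comp (Real.measurable_log.comp hg)
  have h3 : (fun ω => F (g ω)) = (fun s => F (Real.exp s)) ∘ Real.log ∘ g := by
    funext ω
    simp [Real.exp_log (hpos ω)]
  rwa [h3]

/-! ### Expectations of the utility as Bochner integrals -/

section Expectation

variable {Ω : Type*} [MeasurableSpace Ω] {μ : Measure Ω} {U : ℝ → ℝ} {Z : Ω → ℝ}

/-- The utility of `f` is almost surely finite and integrable, so that `E[U(f)]` is the Bochner
integral of its real part. -/
def HasFiniteUtility (μ : Measure Ω) (U : ℝ → ℝ) (f : Ω → ℝ) : Prop :=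
  (∀ᵐ ω ∂μ, Uext U (f ω) ≠ ⊥) ∧ Integrable (fun ω => (Uext U (f ω)).toReal) μ

lemma erealPos_coe (a : ℝ) : erealPos (a : EReal) = ENNReal.ofReal a := by
  simp [erealPos]

lemma measurable_Uext (hU : IsUtility U) {f : Ω → ℝ} (hf : Measurable f) :
    Measurable fun ω => (Uext U (f ω)).toReal :=
  measurable_ereal_toReal.comp ((Uext_mono hU).measurable.comp hf)

lemma HasFiniteUtility.eexp_eq {f : Ω → ℝ} (h : HasFiniteUtility μ U f) :
    eexp μ (fun ω => Uext U (f ω)) = ((∫ ω, (Uext U (f ω)).toReal ∂μ : ℝ) : EReal) := by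
  have h1 : ∫⁻ ω, erealPos (-(Uext U (f ω))) ∂μ
      = ∫⁻ ω, ENNReal.ofReal (-(Uext U (f ω)).toReal) ∂μ := by
    refine lintegral_congr_ae ?_
    filter_upwards [h.1] with ω hω
    conv_lhs => rw [← coe_toReal_Uext hω]
    rw [← EReal.coe_neg, erealPos_coe]
  have h2 : ∫⁻ ω, erealPos (Uext U (f ω)) ∂μ
      = ∫⁻ ω, ENNReal.ofReal (Uext U (f ω)).toReal ∂μ := by
    refine lintegral_congr_ae ?_
    filter_upwards [h.1] with ω hω
    conv_lhs => rw [← coe_toReal_Uext hω]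
    rw [erealPos_coe]
  have h3 := h.2.neg.lintegral_lt_top
  have h4 := h.2.lintegral_lt_top
  simp only [Pi.neg_apply] at h3
  rw [eexp, h1, h2, if_pos h3, integral_eq_lintegral_pos_part_sub_lintegral_neg_part h.2,
    EReal.coe_sub, EReal.coe_ennreal_toReal h4.ne]

/-- Under an integrable upper bound, an expected utility different from `−∞` is a genuine
integral. -/
lemma hasFiniteUtility_of_eexp_ne_bot (hU : IsUtility U) {f k : Ω → ℝ} (hf : Measurable f)
    (hk : Integrable k μ) (hle : ∀ ω, (Uext U (f ω)).toReal ≤ k ω ∨ Uext U (f ω) = ⊥)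
    (h : eexp μ (fun ω => Uext U (f ω)) ≠ ⊥) : HasFiniteUtility μ U f := by
  have hneg : ∫⁻ ω, erealPos (-(Uext U (f ω))) ∂μ < ⊤ := by
    by_contra hcon
    exact h (by rw [eexp, if_neg hcon])
  have hW := (Uext_mono hU).measurable.comp hf
  have hmeas : Measurable fun ω => erealPos (-(Uext U (f ω))) := by
    have h1 : Measurable erealPos := by
      unfold erealPos
      refine Measurable.ite (measurableSet_singleton _) measurable_const ?_
      exact ENNReal.measurable_ofReal.comp measurable_ereal_toReal
    exact h1.comp hW.neg
  have hae : ∀ᵐ ω ∂μ, Uext U (f ω) ≠ ⊥ := by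
    filter_upwards [ae_lt_top hmeas hneg.ne] with ω hω hbot
    rw [hbot] at hω
    simp [erealPos] at hω
  refine ⟨hae, ?_⟩
  have hnegint : Integrable (fun ω => max (-(Uext U (f ω)).toReal) 0) μ := by
    have h1 : Integrable (fun ω => (erealPos (-(Uext U (f ω)))).toReal) μ :=
      integrable_toReal_of_lintegral_ne_top hmeas.aemeasurable hneg.ne
    refine h1.congr ?_
    filter_upwards [hae] with ω hω
    conv_lhs => rw [← coe_toReal_Uext hω]
    rw [← EReal.coe_neg, erealPos_coe, ENNReal.toReal_ofReal']
  refine (hk.norm.add hnegint).mono' (measurable_Uext hU hf).aestronglyMeasurable ?_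
  filter_upwards [hae] with ω hω
  have h1 := (hle ω).resolve_right hω
  simp only [Pi.add_apply, Real.norm_eq_abs]
  rw [abs_le]
  constructor
  · linarith [le_max_left (-(Uext U (f ω)).toReal) 0, abs_nonneg (k ω)]
  · linarith [le_max_right (-(Uext U (f ω)).toReal) 0, le_abs_self (k ω)]

lemma measurable_conj (hU : IsUtility U) (hZm : Measurable Z) (hZpos : ∀ ω, 0 < Z ω)
    {y : ℝ} (hy : 0 < y) : Measurable fun ω => conj U (y * Z ω) :=
  measurable_comp_of_anti (fun _ _ hx hxy => conj_anti hU hx hxy) (hZm.const_mul y)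
    (fun ω => mul_pos hy (hZpos ω))

/-- The dual hypothesis gives integrability of `V(yZ)`: its negative part is dominated by a
multiple of `Z`, because `U` takes positive values. -/
lemma integrable_conj (hU : IsUtility U) (hZm : Measurable Z) (hZpos : ∀ ω, 0 < Z ω)
    (hZint : Integrable Z μ)
    (hV : ∀ y : ℝ, 0 < y → eexp μ (fun ω => ((conj U (y * Z ω) : ℝ) : EReal)) < ⊤)
    {y : ℝ} (hy : 0 < y) : Integrable (fun ω => conj U (y * Z ω)) μ := by
  obtain ⟨x, hx, hUx⟩ := hU.pos_limit
  have hm := measurable_conj hU hZm hZpos hy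
  have hlow : ∀ ω, -conj U (y * Z ω) ≤ x * (y * Z ω) := fun ω => by
    have := le_conj hU (mul_pos hy (hZpos ω)) hx
    linarith
  have hneg : ∫⁻ ω, ENNReal.ofReal (-conj U (y * Z ω)) ∂μ < ⊤ :=
    lt_of_le_of_lt (lintegral_mono fun ω => ENNReal.ofReal_le_ofReal (hlow ω))
      ((hZint.const_mul y).const_mul x).lintegral_lt_top
  have h := hV y hy
  simp only [eexp, ← EReal.coe_neg, erealPos_coe] at h
  rw [if_pos hneg] at h
  have hpos : ∫⁻ ω, ENNReal.ofReal (conj U (y * Z ω)) ∂μ ≠ ⊤ := by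
    intro hcon
    rw [hcon] at h
    simp at h
  have h1 : Integrable (fun ω => (ENNReal.ofReal (conj U (y * Z ω))).toReal) μ :=
    integrable_toReal_of_lintegral_ne_top hm.ennreal_ofReal.aemeasurable hpos
  have h2 : Integrable (fun ω => (ENNReal.ofReal (-conj U (y * Z ω))).toReal) μ :=
    integrable_toReal_of_lintegral_ne_top hm.neg.ennreal_ofReal.aemeasurable hneg.ne
  refine (h1.sub h2).congr (Eventually.of_forall fun ω => ?_)
  simp only [Pi.sub_apply, ENNReal.toReal_ofReal']
  rcases le_total 0 (conj U (y * Z ω)) with h | h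
  · rw [max_eq_left h, max_eq_right (by linarith)]; ring
  · rw [max_eq_right h, max_eq_left (by linarith)]; ring

lemma integral_le_of_finite (hU : IsUtility U) (hZpos : ∀ ω, 0 < Z ω) {f : Ω → ℝ} {y : ℝ}
    (hy : 0 < y) (hf0 : ∀ ω, 0 ≤ f ω) (hZf : Integrable (fun ω => Z ω * f ω) μ)
    (hc : Integrable (fun ω => conj U (y * Z ω)) μ) (h : HasFiniteUtility μ U f) :
    ∫ ω, (Uext U (f ω)).toReal ∂μ
      ≤ ∫ ω, conj U (y * Z ω) ∂μ + y * ∫ ω, Z ω * f ω ∂μ := by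
  rw [← integral_const_mul, ← integral_add hc (hZf.const_mul y)]
  refine integral_mono_ae h.2 (hc.add (hZf.const_mul y)) ?_
  filter_upwards [h.1] with ω hω
  have := le_conj_of_le hU (mul_pos hy (hZpos ω)) (hf0 ω) (coe_toReal_Uext hω).le
  linarith

/-- A pointwise reverse Fatou step: the dual gap `V(yZ) + yZ f − U(f)` is lower semicontinuous
in `f`, and its finiteness in the limit excludes `U(f) = −∞`. -/
lemma gap_le_liminf (hU : IsUtility U) {v c : ℝ} {t : ℕ → ℝ} {t₀ : ℝ} (ht : ∀ n, 0 ≤ t n)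
    (hlim : Tendsto t atTop (𝓝 t₀)) (hbot : ∀ n, Uext U (t n) ≠ ⊥)
    (hfin : liminf (fun n => ENNReal.ofReal (v + c * t n - (Uext U (t n)).toReal)) atTop < ⊤) :
    Uext U t₀ ≠ ⊥ ∧ ENNReal.ofReal (v + c * t₀ - (Uext U t₀).toReal)
      ≤ liminf (fun n => ENNReal.ofReal (v + c * t n - (Uext U (t n)).toReal)) atTop := by
  have key : ∀ b : ℝ, Uext U t₀ < (b : EReal) → ENNReal.ofReal (v + c * t₀ - b)
      ≤ liminf (fun n => ENNReal.ofReal (v + c * t n - (Uext U (t n)).toReal)) atTop := by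
    intro b hb
    have h1 : Tendsto (fun n => ENNReal.ofReal (v + c * t n - b)) atTop
        (𝓝 (ENNReal.ofReal (v + c * t₀ - b))) :=
      ENNReal.tendsto_ofReal (((hlim.const_mul c).const_add v).sub_const b)
    rw [← h1.liminf_eq]
    refine liminf_le_liminf ?_
    filter_upwards [eventually_lt hU ht hlim hb] with n hn
    rw [← coe_toReal_Uext (hbot n), EReal.coe_lt_coe_iff] at hn
    exact ENNReal.ofReal_le_ofReal (by linarith)
  have hne : Uext U t₀ ≠ ⊥ := by
    intro h
    refine hfin.ne (ENNReal.eq_top_of_forall_nnreal_le fun r => ?_)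
    have := key (v + c * t₀ - r) (by rw [h]; exact EReal.bot_lt_coe _)
    simpa using this
  refine ⟨hne, ?_⟩
  have h1 : Tendsto (fun b => ENNReal.ofReal (v + c * t₀ - b)) (𝓝[>] (Uext U t₀).toReal)
      (𝓝 (ENNReal.ofReal (v + c * t₀ - (Uext U t₀).toReal))) :=
    tendsto_nhdsWithin_of_tendsto_nhds (ENNReal.tendsto_ofReal
      ((by fun_prop : Continuous fun b : ℝ => v + c * t₀ - b).tendsto _))
  refine le_of_tendsto h1 ?_
  filter_upwards [self_mem_nhdsWithin] with b hb
  refine key b ?_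
  rw [← coe_toReal_Uext hne]
  exact_mod_cast hb

/-- A tight form of Fatou's lemma: if nonnegative integrable functions have integrals bounded by
a convergent sequence, then anything below their lower limit has integral below the limit. -/
lemma integrable_of_le_liminf {h : ℕ → Ω → ℝ} {g : Ω → ℝ} {b : ℕ → ℝ} {b₀ : ℝ}
    (hm : ∀ n, Measurable (h n)) (hgm : Measurable g)
    (h0 : ∀ n, ∀ᵐ ω ∂μ, 0 ≤ h n ω) (hi : ∀ n, Integrable (h n) μ) (g0 : ∀ᵐ ω ∂μ, 0 ≤ g ω)
    (hb : ∀ n, ∫ ω, h n ω ∂μ ≤ b n) (hlim : Tendsto b atTop (𝓝 b₀))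
    (hle : ∀ᵐ ω ∂μ, ENNReal.ofReal (g ω) ≤ liminf (fun n => ENNReal.ofReal (h n ω)) atTop) :
    Integrable g μ ∧ ∫ ω, g ω ∂μ ≤ b₀ := by
  have hb0 : 0 ≤ b₀ := ge_of_tendsto' hlim fun n => (integral_nonneg_of_ae (h0 n)).trans (hb n)
  have h1 : ∫⁻ ω, ENNReal.ofReal (g ω) ∂μ ≤ ENNReal.ofReal b₀ := by
    calc ∫⁻ ω, ENNReal.ofReal (g ω) ∂μ
        ≤ ∫⁻ ω, liminf (fun n => ENNReal.ofReal (h n ω)) atTop ∂μ := lintegral_mono_ae hle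
      _ ≤ liminf (fun n => ∫⁻ ω, ENNReal.ofReal (h n ω) ∂μ) atTop :=
          lintegral_liminf_le fun n => (hm n).ennreal_ofReal
      _ ≤ liminf (fun n => ENNReal.ofReal (b n)) atTop := by
          refine liminf_le_liminf (Eventually.of_forall fun n => ?_)
          rw [← ofReal_integral_eq_lintegral_ofReal (hi n) (h0 n)]
          exact ENNReal.ofReal_le_ofReal (hb n)
      _ = ENNReal.ofReal b₀ := (ENNReal.tendsto_ofReal hlim).liminf_eq
  have hgi : Integrable g μ := by
    refine ⟨hgm.aestronglyMeasurable, ?_⟩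
    rw [hasFiniteIntegral_iff_ofReal g0]
    exact h1.trans_lt ENNReal.ofReal_lt_top
  refine ⟨hgi, ?_⟩
  rw [← ofReal_integral_eq_lintegral_ofReal hgi g0] at h1
  exact (ENNReal.ofReal_le_ofReal_iff hb0).1 h1

/-- Upper semicontinuity of expected utility along almost surely convergent sequences of bounded
cost. The bound `U(f) ≤ V(yZ) + yZf` holds for every `y > 0`, and reverse Fatou loses at most
`y` times the cost; letting `y → 0` removes the loss. -/
lemma finiteUtility_of_tendsto (hU : IsUtility U) (hZm : Measurable Z) (hZpos : ∀ ω, 0 < Z ω)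
    (hc : ∀ y : ℝ, 0 < y → Integrable (fun ω => conj U (y * Z ω)) μ)
    {f : ℕ → Ω → ℝ} {g : Ω → ℝ} {b r : ℕ → ℝ} {b₀ r₀ : ℝ}
    (hfm : ∀ n, Measurable (f n)) (hf0 : ∀ n ω, 0 ≤ f n ω) (hgm : Measurable g)
    (hg0 : ∀ ω, 0 ≤ g ω) (hfi : ∀ n, Integrable (fun ω => Z ω * f n ω) μ)
    (hfb : ∀ n, ∫ ω, Z ω * f n ω ∂μ ≤ b n) (hb : Tendsto b atTop (𝓝 b₀))
    (hfu : ∀ n, HasFiniteUtility μ U (f n))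
    (hfr : ∀ n, r n ≤ ∫ ω, (Uext U (f n ω)).toReal ∂μ) (hr : Tendsto r atTop (𝓝 r₀))
    (hlim : ∀ᵐ ω ∂μ, Tendsto (fun n => f n ω) atTop (𝓝 (g ω))) :
    Integrable (fun ω => Z ω * g ω) μ ∧ ∫ ω, Z ω * g ω ∂μ ≤ b₀ ∧ HasFiniteUtility μ U g ∧
      r₀ ≤ ∫ ω, (Uext U (g ω)).toReal ∂μ := by
  obtain ⟨hZgi, hZg⟩ : Integrable (fun ω => Z ω * g ω) μ ∧ ∫ ω, Z ω * g ω ∂μ ≤ b₀ := by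
    refine integrable_of_le_liminf (h := fun n ω => Z ω * f n ω) (b := b)
      (fun n => hZm.mul (hfm n)) (hZm.mul hgm)
      (fun n => Eventually.of_forall fun ω => mul_nonneg (hZpos ω).le (hf0 n ω)) hfi
      (Eventually.of_forall fun ω => mul_nonneg (hZpos ω).le (hg0 ω)) hfb hb ?_
    filter_upwards [hlim] with ω hω
    rw [(ENNReal.tendsto_ofReal (hω.const_mul (Z ω))).liminf_eq]
  have hb0 : 0 ≤ b₀ := (integral_nonneg fun ω => mul_nonneg (hZpos ω).le (hg0 ω)).trans hZg
  have hall : ∀ᵐ ω ∂μ, ∀ n, Uext U (f n ω) ≠ ⊥ := ae_all_iff.2 fun n => (hfu n).1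
  have key : ∀ y : ℝ, 0 < y → HasFiniteUtility μ U g ∧
      r₀ - y * b₀ ≤ ∫ ω, (Uext U (g ω)).toReal ∂μ := by
    intro y hy
    have hgapm : ∀ k : Ω → ℝ, Measurable k →
        Measurable fun ω => conj U (y * Z ω) + y * Z ω * k ω - (Uext U (k ω)).toReal :=
      fun k hk => ((measurable_conj hU hZm hZpos hy).add ((hZm.const_mul y).mul hk)).sub
        (measurable_Uext hU hk)
    have hgapint : ∀ k : Ω → ℝ, Integrable (fun ω => Z ω * k ω) μ →
        Integrable (fun ω => conj U (y * Z ω) + y * Z ω * k ω) μ := fun k hk => by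
      simp only [mul_assoc]
      exact (hc y hy).add (hk.const_mul y)
    have hgapint' : ∀ k : Ω → ℝ, Integrable (fun ω => Z ω * k ω) μ →
        ∫ ω, (conj U (y * Z ω) + y * Z ω * k ω) ∂μ
          = ∫ ω, conj U (y * Z ω) ∂μ + y * ∫ ω, Z ω * k ω ∂μ := fun k hk => by
      simp only [mul_assoc]
      rw [integral_add (hc y hy) (hk.const_mul y), integral_const_mul]
    have hgap0 : ∀ k : Ω → ℝ, (∀ ω, 0 ≤ k ω) → ∀ ω, Uext U (k ω) ≠ ⊥ →
        0 ≤ conj U (y * Z ω) + y * Z ω * k ω - (Uext U (k ω)).toReal := fun k hk ω hω => by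
      have := le_conj_of_le hU (mul_pos hy (hZpos ω)) (hk ω) (coe_toReal_Uext hω).le
      linarith
    let h : ℕ → Ω → ℝ := fun n ω =>
      conj U (y * Z ω) + y * Z ω * f n ω - (Uext U (f n ω)).toReal
    have hhi : ∀ n, Integrable (h n) μ := fun n => (hgapint _ (hfi n)).sub (hfu n).2
    have hh0 : ∀ n, ∀ᵐ ω ∂μ, 0 ≤ h n ω := fun n => by
      filter_upwards [(hfu n).1] with ω hω using hgap0 (f n) (hf0 n) ω hω
    have hhb : ∀ n, ∫ ω, h n ω ∂μ ≤ ∫ ω, conj U (y * Z ω) ∂μ + y * b n - r n := fun n => by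
      have h1 : ∫ ω, h n ω ∂μ = _ := integral_sub (hgapint _ (hfi n)) (hfu n).2
      rw [h1, hgapint' _ (hfi n)]
      have := mul_le_mul_of_nonneg_left (hfb n) hy.le
      linarith [hfr n]
    have hblim : Tendsto (fun n => ∫ ω, conj U (y * Z ω) ∂μ + y * b n - r n) atTop
        (𝓝 (∫ ω, conj U (y * Z ω) ∂μ + y * b₀ - r₀)) :=
      ((hb.const_mul y).const_add _).sub hr
    have hfin : ∀ᵐ ω ∂μ, liminf (fun n => ENNReal.ofReal (h n ω)) atTop < ⊤ := by
      refine ae_lt_top (Measurable.liminf fun n => (hgapm _ (hfm n)).ennreal_ofReal) ?_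
      refine ne_top_of_le_ne_top ?_ (lintegral_liminf_le fun n => (hgapm _ (hfm n)).ennreal_ofReal)
      refine ne_top_of_le_ne_top ENNReal.ofReal_ne_top
        (le_of_le_of_eq ?_ (ENNReal.tendsto_ofReal hblim).liminf_eq)
      refine liminf_le_liminf (Eventually.of_forall fun n => ?_)
      change ∫⁻ ω, ENNReal.ofReal (h n ω) ∂μ ≤ _
      rw [← ofReal_integral_eq_lintegral_ofReal (hhi n) (hh0 n)]
      exact ENNReal.ofReal_le_ofReal (hhb n)
    have hgap : ∀ᵐ ω ∂μ, Uext U (g ω) ≠ ⊥ ∧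
        ENNReal.ofReal (conj U (y * Z ω) + y * Z ω * g ω - (Uext U (g ω)).toReal)
          ≤ liminf (fun n => ENNReal.ofReal (h n ω)) atTop := by
      filter_upwards [hlim, hall, hfin] with ω h1 h2 h3
      exact gap_le_liminf hU (fun n => hf0 n ω) h1 h2 h3
    obtain ⟨hi, hle⟩ := integrable_of_le_liminf (fun n => hgapm _ (hfm n)) (hgapm g hgm) hh0 hhi
      (hgap.mono fun ω hω => hgap0 g hg0 ω hω.1) hhb hblim (hgap.mono fun ω hω => hω.2)
    have hUi : Integrable (fun ω => (Uext U (g ω)).toReal) μ := by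
      refine ((hgapint g hZgi).sub hi).congr (Eventually.of_forall fun ω => ?_)
      simp
    refine ⟨⟨hgap.mono fun ω hω => hω.1, hUi⟩, ?_⟩
    rw [integral_sub (hgapint g hZgi) hUi, hgapint' g hZgi] at hle
    have := mul_nonneg hy.le (integral_nonneg (μ := μ) fun ω => mul_nonneg (hZpos ω).le (hg0 ω))
    linarith
  refine ⟨hZgi, hZg, (key 1 one_pos).1, ?_⟩
  have h1 : Tendsto (fun y : ℝ => r₀ - y * b₀) (𝓝[>] 0) (𝓝 (r₀ - 0 * b₀)) :=
    tendsto_nhdsWithin_of_tendsto_nhds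
      ((by fun_prop : Continuous fun y : ℝ => r₀ - y * b₀).tendsto 0)
  rw [zero_mul, sub_zero] at h1
  refine le_of_tendsto h1 ?_
  filter_upwards [self_mem_nhdsWithin] with y hy using (key y hy).2

end Expectation

/-! ### The optimiser on an atomless measure -/

section AtomlessPart

variable {Ω : Type*} [MeasurableSpace Ω] {μ : Measure Ω} {U : ℝ → ℝ} {Z : Ω → ℝ}

lemma IsAtomless.restrict {A : Set Ω} (h : IsAtomless μ A) (hA : MeasurableSet A) :
    IsAtomless (μ.restrict A) Set.univ := by
  intro E _ hE hE0
  rw [Measure.restrict_apply hE] at hE0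
  obtain ⟨B, hB, hBm, hB0, hB1⟩ := h (E ∩ A) Set.inter_subset_right (hE.inter hA) hE0
  refine ⟨B, hB.trans Set.inter_subset_left, hBm, ?_, ?_⟩
  · rwa [Measure.restrict_apply hBm,
      Set.inter_eq_self_of_subset_left (hB.trans Set.inter_subset_right)]
  · rw [Measure.restrict_apply (hE.diff hBm)]
    convert hB1 using 2
    ext ω
    simp only [Set.mem_inter_iff, Set.mem_sdiff]
    tauto

lemma IsAtomless.withDensity (h : IsAtomless μ Set.univ) {d : Ω → ℝ≥0∞} (hd : Measurable d) :
    IsAtomless (μ.withDensity d) Set.univ := by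
  intro E _ hE hE0
  have hDm : MeasurableSet {ω | d ω ≠ 0} := hd (measurableSet_singleton 0).compl
  rw [Ne, withDensity_apply_eq_zero hd] at hE0
  obtain ⟨B, hB, hBm, hB0, hB1⟩ := h _ (Set.subset_univ _) (hDm.inter hE) hE0
  refine ⟨B, hB.trans Set.inter_subset_right, hBm, ?_, ?_⟩
  · rwa [Ne, withDensity_apply_eq_zero hd,
      Set.inter_eq_self_of_subset_right (hB.trans Set.inter_subset_left)]
  · rw [Ne, withDensity_apply_eq_zero hd]
    convert hB1 using 3
    ext ω
    simp only [Set.mem_inter_iff, Set.mem_sdiff]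
    tauto

lemma measurable_sel (hU : IsUtility U) (hZm : Measurable Z) (hZpos : ∀ ω, 0 < Z ω)
    {y : ℝ} (hy : 0 < y) : Measurable fun ω => sel U (y * Z ω) :=
  measurable_comp_of_anti (fun _ _ hx hxy => sel_anti hU hx hxy) (hZm.const_mul y)
    (fun ω => mul_pos hy (hZpos ω))

lemma integrable_of_isArgMax (hU : IsUtility U) (hZm : Measurable Z) (hZpos : ∀ ω, 0 < Z ω)
    (hc : ∀ y : ℝ, 0 < y → Integrable (fun ω => conj U (y * Z ω)) μ) {y : ℝ} (hy : 0 < y)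
    {f : Ω → ℝ} (hf : Measurable f) (hmax : ∀ ω, IsArgMax U (y * Z ω) (f ω)) :
    Integrable (fun ω => Z ω * f ω) μ := by
  have h1 := ((hc (y / 2) (half_pos hy)).sub (hc y hy)).const_mul (2 / y)
  refine h1.mono' (hZm.mul hf).aestronglyMeasurable (Eventually.of_forall fun ω => ?_)
  have h2 := (hmax ω).mul_le hU (mul_pos hy (hZpos ω))
  have h3 : y * Z ω / 2 = y / 2 * Z ω := by ring
  rw [h3] at h2
  rw [Real.norm_of_nonneg (mul_nonneg (hZpos ω).le (hmax ω).1)]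
  simp only [Pi.sub_apply]
  calc Z ω * f ω = 2 / y * (y / 2 * Z ω * f ω) := by field_simp
    _ ≤ _ := by gcongr

lemma integrable_sel (hU : IsUtility U) (hZm : Measurable Z) (hZpos : ∀ ω, 0 < Z ω)
    (hc : ∀ y : ℝ, 0 < y → Integrable (fun ω => conj U (y * Z ω)) μ) {y : ℝ} (hy : 0 < y) :
    Integrable (fun ω => Z ω * sel U (y * Z ω)) μ :=
  integrable_of_isArgMax hU hZm hZpos hc hy (measurable_sel hU hZm hZpos hy)
    fun ω => sel_mem hU (mul_pos hy (hZpos ω))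

lemma integral_sel_anti (hU : IsUtility U) (hZm : Measurable Z) (hZpos : ∀ ω, 0 < Z ω)
    (hc : ∀ y : ℝ, 0 < y → Integrable (fun ω => conj U (y * Z ω)) μ) {y y' : ℝ} (hy : 0 < y)
    (hyy : y ≤ y') :
    ∫ ω, Z ω * sel U (y' * Z ω) ∂μ ≤ ∫ ω, Z ω * sel U (y * Z ω) ∂μ := by
  refine integral_mono (integrable_sel hU hZm hZpos hc (hy.trans_le hyy))
    (integrable_sel hU hZm hZpos hc hy) fun ω => ?_
  have := hZpos ω
  exact mul_le_mul_of_nonneg_left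
    (sel_anti hU (mul_pos hy this) (mul_le_mul_of_nonneg_right hyy this.le)) this.le

/-- Monotone limits in the multiplier: the selected maximisers converge pointwise to maximisers,
and their costs converge to the cost of the limit. -/
lemma exists_limit_sel (hU : IsUtility U) (hZm : Measurable Z) (hZpos : ∀ ω, 0 < Z ω)
    (hc : ∀ y : ℝ, 0 < y → Integrable (fun ω => conj U (y * Z ω)) μ) {y : ℝ} (hy : 0 < y)
    {v : ℕ → ℝ} (hv : Monotone v ∨ Antitone v) (hvy : ∀ n, y / 2 ≤ v n)
    (hlim : Tendsto v atTop (𝓝 y)) :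
    ∃ g : Ω → ℝ, Measurable g ∧ (∀ ω, IsArgMax U (y * Z ω) (g ω)) ∧
      (∀ ω, Tendsto (fun n => sel U (v n * Z ω)) atTop (𝓝 (g ω))) ∧
      Tendsto (fun n => ∫ ω, Z ω * sel U (v n * Z ω) ∂μ) atTop (𝓝 (∫ ω, Z ω * g ω ∂μ)) := by
  have hy2 := half_pos hy
  have hv0 : ∀ n, 0 < v n := fun n => hy2.trans_le (hvy n)
  have hbd : ∀ ω n, sel U (v n * Z ω) ≤ sel U (y / 2 * Z ω) := fun ω n =>
    sel_anti hU (mul_pos hy2 (hZpos ω)) (mul_le_mul_of_nonneg_right (hvy n) (hZpos ω).le)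
  have hnn : ∀ ω n, 0 ≤ sel U (v n * Z ω) := fun ω n =>
    sel_nonneg hU (mul_pos (hv0 n) (hZpos ω))
  have hex : ∀ ω, ∃ l, Tendsto (fun n => sel U (v n * Z ω)) atTop (𝓝 l) := by
    intro ω
    rcases hv with hv | hv
    · refine ⟨_, tendsto_atTop_ciInf (fun n m hnm => ?_) ⟨0, ?_⟩⟩
      · exact sel_anti hU (mul_pos (hv0 n) (hZpos ω))
          (mul_le_mul_of_nonneg_right (hv hnm) (hZpos ω).le)
      · rintro _ ⟨n, rfl⟩
        exact hnn ω n
    · refine ⟨_, tendsto_atTop_ciSup (fun n m hnm => ?_) ⟨sel U (y / 2 * Z ω), ?_⟩⟩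
      · exact sel_anti hU (mul_pos (hv0 m) (hZpos ω))
          (mul_le_mul_of_nonneg_right (hv hnm) (hZpos ω).le)
      · rintro _ ⟨n, rfl⟩
        exact hbd ω n
  choose g hg using hex
  have hgm : Measurable g := measurable_of_tendsto_metrizable
    (fun n => measurable_sel hU hZm hZpos (hv0 n)) (tendsto_pi_nhds.2 hg)
  refine ⟨g, hgm, fun ω => ?_, hg, ?_⟩
  · exact IsArgMax.closed hU (fun n => sel_mem hU (mul_pos (hv0 n) (hZpos ω)))
      (hlim.mul_const (Z ω)) (hg ω)
  · refine tendsto_integral_of_dominated_convergence (fun ω => Z ω * sel U (y / 2 * Z ω))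
      (fun n => (hZm.mul (measurable_sel hU hZm hZpos (hv0 n))).aestronglyMeasurable)
      (integrable_sel hU hZm hZpos hc hy2) (fun n => Eventually.of_forall fun ω => ?_)
      (Eventually.of_forall fun ω => (hg ω).const_mul (Z ω))
    rw [Real.norm_of_nonneg (mul_nonneg (hZpos ω).le (hnn ω n))]
    exact mul_le_mul_of_nonneg_left (hbd ω n) (hZpos ω).le

lemma hasFiniteUtility_of_isArgMax (hU : IsUtility U) (hZpos : ∀ ω, 0 < Z ω)
    (hc : ∀ y : ℝ, 0 < y → Integrable (fun ω => conj U (y * Z ω)) μ) {y : ℝ} (hy : 0 < y)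
    {f : Ω → ℝ} (hmax : ∀ ω, IsArgMax U (y * Z ω) (f ω))
    (hi : Integrable (fun ω => Z ω * f ω) μ) : HasFiniteUtility μ U f := by
  refine ⟨Eventually.of_forall fun ω => (hmax ω).ne_bot, ?_⟩
  refine ((hc y hy).add (hi.const_mul y)).congr (Eventually.of_forall fun ω => ?_)
  change conj U (y * Z ω) + y * (Z ω * f ω) = (Uext U (f ω)).toReal
  rw [(hmax ω).toReal_eq hU (mul_pos hy (hZpos ω)), mul_assoc]

/-- At an intermediate multiplier the budget is met exactly by switching, on a set of suitable
cost, from the smaller to the larger pointwise maximiser. -/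
lemma exists_between (hat : IsAtomless μ Set.univ) (hZm : Measurable Z)
    (hZpos : ∀ ω, 0 < Z ω) {y x : ℝ} {p q : Ω → ℝ} (hp : Measurable p) (hq : Measurable q)
    (hpm : ∀ ω, IsArgMax U (y * Z ω) (p ω)) (hqm : ∀ ω, IsArgMax U (y * Z ω) (q ω))
    (hpi : Integrable (fun ω => Z ω * p ω) μ) (hqi : Integrable (fun ω => Z ω * q ω) μ)
    (hpq : ∀ ω, p ω ≤ q ω) (hpx : ∫ ω, Z ω * p ω ∂μ ≤ x) (hxq : x ≤ ∫ ω, Z ω * q ω ∂μ) :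
    ∃ f : Ω → ℝ, Measurable f ∧ (∀ ω, IsArgMax U (y * Z ω) (f ω)) ∧
      Integrable (fun ω => Z ω * f ω) μ ∧ ∫ ω, Z ω * f ω ∂μ = x := by
  classical
  let d : Ω → ℝ := fun ω => Z ω * q ω - Z ω * p ω
  have hd0 : ∀ ω, 0 ≤ d ω := fun ω =>
    sub_nonneg.2 (mul_le_mul_of_nonneg_left (hpq ω) (hZpos ω).le)
  have hdm : Measurable d := (hZm.mul hq).sub (hZm.mul hp)
  have hdi : Integrable d μ := hqi.sub hpi
  have hfin : IsFiniteMeasure (μ.withDensity fun ω => ENNReal.ofReal (d ω)) :=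
    isFiniteMeasure_withDensity_ofReal hdi.2
  have hν : ∀ B, MeasurableSet B → (μ.withDensity fun ω => ENNReal.ofReal (d ω)) B
      = ENNReal.ofReal (∫ ω in B, d ω ∂μ) := fun B hB => by
    rw [withDensity_apply _ hB, ofReal_integral_eq_lintegral_ofReal hdi.integrableOn
      (Eventually.of_forall hd0)]
  have hdint : ∫ ω, d ω ∂μ = ∫ ω, Z ω * q ω ∂μ - ∫ ω, Z ω * p ω ∂μ := integral_sub hqi hpi
  obtain ⟨B, hB, hBν⟩ := (hat.withDensity hdm.ennreal_ofReal).exists_measure_eq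
    (t := ENNReal.ofReal (x - ∫ ω, Z ω * p ω ∂μ)) (by
      rw [hν _ MeasurableSet.univ, setIntegral_univ, hdint]
      exact ENNReal.ofReal_le_ofReal (by linarith))
  rw [hν B hB, ENNReal.ofReal_eq_ofReal_iff (setIntegral_nonneg hB fun ω _ => hd0 ω)
    (sub_nonneg.2 hpx)] at hBν
  have hsplit : (fun ω => Z ω * B.piecewise q p ω)
      = fun ω => Z ω * p ω + B.indicator d ω := by
    funext ω
    by_cases h : ω ∈ B <;> simp [h, d]
  refine ⟨B.piecewise q p, hq.piecewise hB hp, fun ω => ?_, ?_, ?_⟩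
  · by_cases h : ω ∈ B <;> simp [h, hpm ω, hqm ω]
  · rw [hsplit]
    exact hpi.add (hdi.indicator hB)
  · rw [hsplit, integral_add hpi (hdi.indicator hB), integral_indicator hB, hBν]
    ring

/-- If no positive multiplier exhausts the budget `x`, then `U` attains its supremum at a point
`t` whose constant payoff is affordable. -/
lemma exists_satiation [IsFiniteMeasure μ] (hμ : μ ≠ 0) (hU : IsUtility U) (hZm : Measurable Z)
    (hZpos : ∀ ω, 0 < Z ω) (hZint : Integrable Z μ)
    (hc : ∀ y : ℝ, 0 < y → Integrable (fun ω => conj U (y * Z ω)) μ) {x : ℝ}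
    (h : ∀ y : ℝ, 0 < y → ∫ ω, Z ω * sel U (y * Z ω) ∂μ < x) :
    ∃ t, IsArgMax U 0 t ∧ ∫ ω, Z ω * t ∂μ ≤ x := by
  obtain ⟨K, hK⟩ : ∃ K : ℕ, μ {ω | Z ω ≤ (K + 1 : ℕ)} ≠ 0 := by
    by_contra hcon
    push Not at hcon
    have h1 := measure_iUnion_null hcon
    have h2 : (⋃ K : ℕ, {ω | Z ω ≤ (K + 1 : ℕ)}) = Set.univ := by
      refine Set.eq_univ_of_forall fun ω => Set.mem_iUnion.2 ?_
      obtain ⟨n, hn⟩ := exists_nat_ge (Z ω)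
      exact ⟨n, hn.trans (by push_cast; linarith)⟩
    rw [h2, Measure.measure_univ_eq_zero] at h1
    exact hμ h1
  have hk : (0 : ℝ) < (K + 1 : ℕ) := by positivity
  generalize ((K + 1 : ℕ) : ℝ) = k at hK hk
  have hD : MeasurableSet {ω | Z ω ≤ k} := measurableSet_le hZm measurable_const
  have hDpos : 0 < ∫ ω in {ω | Z ω ≤ k}, Z ω ∂μ := by
    rw [integral_pos_iff_support_of_nonneg (fun ω => (hZpos ω).le) hZint.integrableOn]
    have : Function.support Z = Set.univ :=
      Set.eq_univ_of_forall fun ω => (hZpos ω).ne'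
    rw [this, Measure.restrict_apply_univ]
    exact pos_iff_ne_zero.2 hK
  have hbd : ∀ c : ℝ, 0 < c → sel U c ≤ x / ∫ ω in {ω | Z ω ≤ k}, Z ω ∂μ := by
    intro c hc0
    have hy : 0 < c / k := div_pos hc0 hk
    have hi := integrable_sel hU hZm hZpos hc hy
    rw [le_div_iff₀ hDpos]
    refine le_trans ?_ (h _ hy).le
    rw [← integral_const_mul]
    calc ∫ ω in {ω | Z ω ≤ k}, sel U c * Z ω ∂μ
        ≤ ∫ ω in {ω | Z ω ≤ k}, Z ω * sel U (c / k * Z ω) ∂μ := by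
          refine setIntegral_mono_on (hZint.integrableOn.const_mul _) hi.integrableOn hD
            fun ω hω => ?_
          rw [mul_comm]
          refine mul_le_mul_of_nonneg_left ?_ (hZpos ω).le
          refine sel_anti hU (mul_pos hy (hZpos ω)) ?_
          calc c / k * Z ω ≤ c / k * k := mul_le_mul_of_nonneg_left hω hy.le
            _ = c := div_mul_cancel₀ _ hk.ne'
      _ ≤ ∫ ω, Z ω * sel U (c / k * Z ω) ∂μ :=
          setIntegral_le_integral hi (Eventually.of_forall fun ω =>
            mul_nonneg (hZpos ω).le (sel_nonneg hU (mul_pos hy (hZpos ω))))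
  have hn0 : ∀ n : ℕ, (0 : ℝ) < 1 / ((n : ℝ) + 1) := fun n => by positivity
  have hlim0 : Tendsto (fun n : ℕ => 1 / ((n : ℝ) + 1)) atTop (𝓝 0) :=
    tendsto_one_div_add_atTop_nhds_zero_nat
  have hmono : Monotone fun n : ℕ => sel U (1 / ((n : ℝ) + 1)) := fun n m hnm =>
    sel_anti hU (hn0 m) (one_div_le_one_div_of_le (by positivity) (by gcongr))
  obtain ⟨t, ht⟩ : ∃ t, Tendsto (fun n : ℕ => sel U (1 / ((n : ℝ) + 1))) atTop (𝓝 t) := by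
    refine ⟨_, tendsto_atTop_ciSup hmono ⟨x / ∫ ω in {ω | Z ω ≤ k}, Z ω ∂μ, ?_⟩⟩
    rintro _ ⟨n, rfl⟩
    exact hbd _ (hn0 n)
  have htmax : IsArgMax U 0 t := IsArgMax.closed hU (fun n => sel_mem hU (hn0 n)) hlim0 ht
  have hle : ∀ c : ℝ, 0 < c → sel U c ≤ t := fun c hc0 => htmax.anti (sel_mem hU hc0) hc0
  have hsel : Tendsto (sel U) (𝓝[>] 0) (𝓝 t) := by
    rw [tendsto_order]
    refine ⟨fun a ha => ?_, fun a ha => ?_⟩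
    · obtain ⟨n, hn⟩ := (ht.eventually (lt_mem_nhds ha)).exists
      filter_upwards [Ioc_mem_nhdsGT (hn0 n)] with c hc0
      exact hn.trans_le (sel_anti hU hc0.1 hc0.2)
    · filter_upwards [self_mem_nhdsWithin] with c hc0
      exact (hle c hc0).trans_lt ha
  refine ⟨t, htmax, ?_⟩
  have hconv : Tendsto (fun n : ℕ => ∫ ω, Z ω * sel U (1 / ((n : ℝ) + 1) * Z ω) ∂μ) atTop
      (𝓝 (∫ ω, Z ω * t ∂μ)) := by
    refine tendsto_integral_of_dominated_convergence (fun ω => Z ω * t)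
      (fun n => (hZm.mul (measurable_sel hU hZm hZpos (hn0 n))).aestronglyMeasurable)
      (hZint.mul_const t) (fun n => Eventually.of_forall fun ω => ?_)
      (Eventually.of_forall fun ω => Tendsto.const_mul (Z ω) (hsel.comp ?_))
    · have h1 := mul_pos (hn0 n) (hZpos ω)
      rw [Real.norm_of_nonneg (mul_nonneg (hZpos ω).le (sel_nonneg hU h1))]
      exact mul_le_mul_of_nonneg_left (hle _ h1) (hZpos ω).le
    · refine tendsto_nhdsWithin_iff.2 ⟨?_, Eventually.of_forall fun n =>
        mul_pos (hn0 n) (hZpos ω)⟩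
      simpa using hlim0.mul_const (Z ω)
  exact le_of_tendsto' hconv fun n => (h _ (hn0 n)).le

/-- On an atomless measure and for a positive budget `x` there are a Lagrange multiplier `y` and
a payoff that maximises the Lagrangian pointwise and satisfies complementary slackness. -/
lemma exists_multiplier [IsFiniteMeasure μ] (hμ : μ ≠ 0) (hat : IsAtomless μ Set.univ)
    (hU : IsUtility U) (hZm : Measurable Z) (hZpos : ∀ ω, 0 < Z ω) (hZint : Integrable Z μ)
    (hc : ∀ y : ℝ, 0 < y → Integrable (fun ω => conj U (y * Z ω)) μ) {x : ℝ} (hx : 0 < x) :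
    ∃ (f : Ω → ℝ) (y : ℝ), Measurable f ∧ (∀ ω, IsArgMax U (y * Z ω) (f ω)) ∧
      Integrable (fun ω => Z ω * f ω) μ ∧ ∫ ω, Z ω * f ω ∂μ ≤ x ∧
      y * ∫ ω, Z ω * f ω ∂μ = y * x ∧ HasFiniteUtility μ U f := by
  by_cases hcase : ∀ y : ℝ, 0 < y → ∫ ω, Z ω * sel U (y * Z ω) ∂μ < x
  · obtain ⟨t, ht, htx⟩ := exists_satiation hμ hU hZm hZpos hZint hc hcase
    exact ⟨fun _ => t, 0, measurable_const, fun ω => by rwa [zero_mul], hZint.mul_const t, htx,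
      by simp, Eventually.of_forall fun ω => ht.ne_bot, integrable_const _⟩
  push Not at hcase
  obtain ⟨y₁, hy₁, hxy₁⟩ := hcase
  let S : Set ℝ := {y | 0 < y ∧ x ≤ ∫ ω, Z ω * sel U (y * Z ω) ∂μ}
  have hS1 : y₁ ∈ S := ⟨hy₁, hxy₁⟩
  have hSb : BddAbove S := by
    have h1 : Tendsto (fun y : ℝ => ∫ ω, Z ω * sel U (y * Z ω) ∂μ) atTop (𝓝 (∫ ω, Z ω * 0 ∂μ)) := by
      refine tendsto_integral_filter_of_dominated_convergence (fun ω => Z ω * sel U (1 * Z ω))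
        ?_ ?_ (integrable_sel hU hZm hZpos hc one_pos)
        (Eventually.of_forall fun ω => Tendsto.const_mul (Z ω)
          ((tendsto_sel hU).comp (tendsto_id.atTop_mul_const (hZpos ω))))
      · filter_upwards [eventually_gt_atTop 0] with y hy
        exact (hZm.mul (measurable_sel hU hZm hZpos hy)).aestronglyMeasurable
      · filter_upwards [eventually_ge_atTop 1] with y hy
        refine Eventually.of_forall fun ω => ?_
        have h2 : 0 < y * Z ω := mul_pos (by linarith) (hZpos ω)
        rw [Real.norm_of_nonneg (mul_nonneg (hZpos ω).le (sel_nonneg hU h2))]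
        refine mul_le_mul_of_nonneg_left ?_ (hZpos ω).le
        exact sel_anti hU (mul_pos one_pos (hZpos ω))
          (mul_le_mul_of_nonneg_right hy (hZpos ω).le)
    simp only [mul_zero, integral_zero] at h1
    obtain ⟨Y, hY⟩ := eventually_atTop.1 (h1.eventually (gt_mem_nhds hx))
    refine ⟨Y, fun y hy => ?_⟩
    by_contra hcon
    exact absurd hy.2 (not_le.2 (hY y (not_le.1 hcon).le))
  set y := sSup S with hydef
  have hy : 0 < y := hy₁.trans_le (le_csSup hSb hS1)
  have hbelow : ∀ z, 0 < z → z < y → x ≤ ∫ ω, Z ω * sel U (z * Z ω) ∂μ := fun z hz hzy => by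
    obtain ⟨z', hz', hlt⟩ := exists_lt_of_lt_csSup ⟨_, hS1⟩ hzy
    exact hz'.2.trans (integral_sel_anti hU hZm hZpos hc hz hlt.le)
  have habove : ∀ z, y < z → ∫ ω, Z ω * sel U (z * Z ω) ∂μ ≤ x := fun z hz => by
    by_contra hcon
    exact absurd (le_csSup hSb ⟨hy.trans hz, (not_le.1 hcon).le⟩) (not_le.2 hz)
  have hn0 : ∀ n : ℕ, (0 : ℝ) < 1 / ((n : ℝ) + 2) := fun n => by positivity
  have hn1 : ∀ n : ℕ, 1 / ((n : ℝ) + 2) ≤ 1 / 2 := fun n =>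
    one_div_le_one_div_of_le (by norm_num) (by have : (0 : ℝ) ≤ n := n.cast_nonneg; linarith)
  have hanti : Antitone fun n : ℕ => 1 / ((n : ℝ) + 2) := fun n m hnm =>
    one_div_le_one_div_of_le (by positivity) (by gcongr)
  have hlim0 : Tendsto (fun n : ℕ => 1 / ((n : ℝ) + 2)) atTop (𝓝 0) :=
    tendsto_const_nhds.div_atTop
      (tendsto_atTop_add_const_right _ _ tendsto_natCast_atTop_atTop)
  obtain ⟨q, hqm, hqmax, hqlim, hqint⟩ := exists_limit_sel hU hZm hZpos hc hy
    (v := fun n : ℕ => y * (1 - 1 / ((n : ℝ) + 2)))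
    (Or.inl fun n m hnm => mul_le_mul_of_nonneg_left (sub_le_sub_left (hanti hnm) _) hy.le)
    (fun n => by nlinarith [hn1 n])
    (by simpa using (hlim0.const_sub 1).const_mul y)
  obtain ⟨p, hpm, hpmax, hplim, hpint⟩ := exists_limit_sel hU hZm hZpos hc hy
    (v := fun n : ℕ => y * (1 + 1 / ((n : ℝ) + 2)))
    (Or.inr fun n m hnm => mul_le_mul_of_nonneg_left (add_le_add_right (hanti hnm) _) hy.le)
    (fun n => by nlinarith [hn0 n])
    (by simpa using (hlim0.const_add 1).const_mul y)
  have hlow : ∀ n : ℕ, 0 < y * (1 - 1 / ((n : ℝ) + 2)) := fun n =>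
    mul_pos hy (by linarith [hn1 n])
  obtain ⟨f, hf, hfmax, hfi, hfx⟩ := exists_between hat hZm hZpos (x := x) hpm hqm hpmax hqmax
    (integrable_of_isArgMax hU hZm hZpos hc hy hpm hpmax)
    (integrable_of_isArgMax hU hZm hZpos hc hy hqm hqmax)
    (fun ω => le_of_tendsto_of_tendsto' (hplim ω) (hqlim ω) fun n =>
      sel_anti hU (mul_pos (hlow n) (hZpos ω))
        (mul_le_mul_of_nonneg_right (by nlinarith [hn0 n]) (hZpos ω).le))
    (le_of_tendsto' hpint fun n => habove _ (by nlinarith [hn0 n]))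
    (ge_of_tendsto' hqint fun n => hbelow _ (hlow n) (by nlinarith [hn0 n]))
  exact ⟨f, y, hf, hfmax, hfi, hfx.le, by rw [hfx],
    hasFiniteUtility_of_isArgMax hU hZpos hc hy hfmax hfi⟩

/-- Optimality of a pointwise Lagrangian maximiser, with the multiplier as the price of
additional budget. -/
lemma integral_le_of_isArgMax {f k : Ω → ℝ} {y : ℝ}
    (hmax : ∀ ω, IsArgMax U (y * Z ω) (f ω)) (hfi : Integrable (fun ω => Z ω * f ω) μ)
    (hfu : HasFiniteUtility μ U f) (hk0 : ∀ ω, 0 ≤ k ω)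
    (hki : Integrable (fun ω => Z ω * k ω) μ) (hku : HasFiniteUtility μ U k) :
    ∫ ω, (Uext U (k ω)).toReal ∂μ ≤ ∫ ω, (Uext U (f ω)).toReal ∂μ
      + y * (∫ ω, Z ω * k ω ∂μ - ∫ ω, Z ω * f ω ∂μ) := by
  have hi : Integrable (fun ω => y * (Z ω * k ω - Z ω * f ω)) μ := (hki.sub hfi).const_mul y
  rw [← integral_sub hki hfi, ← integral_const_mul, ← integral_add hfu.2 hi]
  refine integral_mono_ae hku.2 (hfu.2.add hi) ?_
  filter_upwards [hku.1] with ω hω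
  have := (hmax ω).le (hk0 ω) (coe_toReal_Uext hω).le
  change _ ≤ (Uext U (f ω)).toReal + y * (Z ω * k ω - Z ω * f ω)
  linarith

end AtomlessPart

/-! ### Maximising sequences -/

section Existence

variable {Ω : Type*} [MeasurableSpace Ω] {μ : Measure Ω} {U : ℝ → ℝ} {Z : Ω → ℝ}

/-- A nonnegative payoff of finite cost and finite expected utility. -/
structure Admissible (μ : Measure Ω) (U : ℝ → ℝ) (Z f : Ω → ℝ) : Prop where
  meas : Measurable f
  nonneg : ∀ ω, 0 ≤ f ω
  cost : Integrable (fun ω => Z ω * f ω) μ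
  util : HasFiniteUtility μ U f

lemma Admissible.restrict {f : Ω → ℝ} (h : Admissible μ U Z f) (S : Set Ω) :
    Admissible (μ.restrict S) U Z f :=
  ⟨h.meas, h.nonneg, h.cost.restrict, ae_restrict_of_ae h.util.1, h.util.2.restrict⟩

lemma Admissible.piecewise {S : Set Ω} [DecidablePred (· ∈ S)] (hS : MeasurableSet S)
    {g h : Ω → ℝ} (hg : Admissible (μ.restrict S) U Z g)
    (hh : Admissible (μ.restrict Sᶜ) U Z h) :
    Admissible μ U Z (S.piecewise g h) ∧
      ∫ ω, Z ω * S.piecewise g h ω ∂μ = ∫ ω in S, Z ω * g ω ∂μ + ∫ ω in Sᶜ, Z ω * h ω ∂μ ∧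
      ∫ ω, (Uext U (S.piecewise g h ω)).toReal ∂μ
        = ∫ ω in S, (Uext U (g ω)).toReal ∂μ + ∫ ω in Sᶜ, (Uext U (h ω)).toReal ∂μ := by
  have hZ : (fun ω => Z ω * S.piecewise g h ω)
      = S.piecewise (fun ω => Z ω * g ω) (fun ω => Z ω * h ω) := by
    funext ω
    by_cases hω : ω ∈ S <;> simp [hω]
  have hW : (fun ω => (Uext U (S.piecewise g h ω)).toReal)
      = S.piecewise (fun ω => (Uext U (g ω)).toReal) (fun ω => (Uext U (h ω)).toReal) := by
    funext ω
    by_cases hω : ω ∈ S <;> simp [hω]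
  refine ⟨⟨hg.meas.piecewise hS hh.meas, fun ω => ?_, ?_, ?_, ?_⟩, ?_, ?_⟩
  · by_cases hω : ω ∈ S <;> simp [hω, hg.nonneg, hh.nonneg]
  · rw [hZ]
    exact Integrable.piecewise hS hg.cost hh.cost
  · refine ae_of_ae_restrict_of_ae_restrict_compl S ?_ ?_
    · filter_upwards [hg.util.1, ae_restrict_mem hS] with ω h1 h2
      simpa [h2] using h1
    · filter_upwards [hh.util.1, ae_restrict_mem hS.compl] with ω h1 h2
      rw [Set.piecewise_eq_of_notMem _ _ _ h2]
      exact h1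
  · rw [hW]
    exact Integrable.piecewise hS hg.util.2 hh.util.2
  · rw [hZ, integral_piecewise hS hg.cost hh.cost]
  · rw [hW, integral_piecewise hS hg.util.2 hh.util.2]

lemma mem_Cset_iff (hZm : Measurable Z) (hZpos : ∀ ω, 0 < Z ω) {x : ℝ} (hx : 0 ≤ x)
    {f : Ω → ℝ} : f ∈ Cset μ Z x ↔ Measurable f ∧ (∀ ω, 0 ≤ f ω) ∧
      Integrable (fun ω => Z ω * f ω) μ ∧ ∫ ω, Z ω * f ω ∂μ ≤ x := by
  refine and_congr_right fun hf => and_congr_right fun hf0 => ?_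
  have h0 : ∀ᵐ ω ∂μ, 0 ≤ Z ω * f ω :=
    Eventually.of_forall fun ω => mul_nonneg (hZpos ω).le (hf0 ω)
  constructor
  · intro h
    have hi : Integrable (fun ω => Z ω * f ω) μ := by
      refine ⟨(hZm.mul hf).aestronglyMeasurable, ?_⟩
      rw [hasFiniteIntegral_iff_ofReal h0]
      exact h.trans_lt ENNReal.ofReal_lt_top
    rw [← ofReal_integral_eq_lintegral_ofReal hi h0] at h
    exact ⟨hi, (ENNReal.ofReal_le_ofReal_iff hx).1 h⟩
  · rintro ⟨hi, h⟩
    rw [← ofReal_integral_eq_lintegral_ofReal hi h0]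
    exact ENNReal.ofReal_le_ofReal h

/-- On an atom a payoff is a constant, which the budget bounds; on a null set any constant
will do. -/
lemma IsPreAtom.exists_bound {a : Set Ω} (ha : IsPreAtom μ a) (hZpos : ∀ ω, 0 < Z ω)
    (hZint : Integrable Z μ) (x : ℝ) :
    ∃ M : ℝ, ∀ f : Ω → ℝ, Measurable f → (∀ ω, 0 ≤ f ω) → Integrable (fun ω => Z ω * f ω) μ →
      ∫ ω, Z ω * f ω ∂μ ≤ x → ∃ c ∈ Set.Icc 0 M, ∀ᵐ ω ∂μ.restrict a, f ω = c := by
  by_cases h0 : μ a = 0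
  · refine ⟨0, fun f _ _ _ _ => ⟨0, by simp, ?_⟩⟩
    rw [Measure.restrict_eq_zero.2 h0]
    simp
  have hpos : 0 < ∫ ω in a, Z ω ∂μ := by
    rw [integral_pos_iff_support_of_nonneg (fun ω => (hZpos ω).le) hZint.integrableOn]
    have : Function.support Z = Set.univ := Set.eq_univ_of_forall fun ω => (hZpos ω).ne'
    rw [this, Measure.restrict_apply_univ]
    exact pos_iff_ne_zero.2 h0
  refine ⟨x / ∫ ω in a, Z ω ∂μ, fun f hf hf0 hfi hfx => ?_⟩
  obtain ⟨c, hc⟩ := ha.ae_const hf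
  refine ⟨c, ⟨?_, ?_⟩, hc⟩
  · have : (ae (μ.restrict a)).NeBot := ae_neBot.2 (mt Measure.restrict_eq_zero.1 h0)
    obtain ⟨ω, hω⟩ := hc.exists
    exact hω ▸ hf0 ω
  · rw [le_div_iff₀ hpos, mul_comm, ← integral_mul_const]
    calc ∫ ω in a, Z ω * c ∂μ = ∫ ω in a, Z ω * f ω ∂μ := by
          refine integral_congr_ae ?_
          filter_upwards [hc] with ω hω
          rw [hω]
      _ ≤ ∫ ω, Z ω * f ω ∂μ := setIntegral_le_integral hfi
          (Eventually.of_forall fun ω => mul_nonneg (hZpos ω).le (hf0 ω))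
      _ ≤ x := hfx

/-- Compactness on the atomic part: payoffs within a budget are, on countably many atoms, points
of a product of compact intervals. -/
lemma exists_subseq_atoms {a : ℕ → Set Ω} (ha : ∀ i, IsPreAtom μ (a i)) (hZpos : ∀ ω, 0 < Z ω)
    (hZint : Integrable Z μ) {x : ℝ} {f : ℕ → Ω → ℝ} (hfm : ∀ n, Measurable (f n))
    (hf0 : ∀ n ω, 0 ≤ f n ω) (hfi : ∀ n, Integrable (fun ω => Z ω * f n ω) μ)
    (hfx : ∀ n, ∫ ω, Z ω * f n ω ∂μ ≤ x) :
    ∃ φ : ℕ → ℕ, StrictMono φ ∧ ∀ᵐ ω ∂μ.restrict (⋃ i, a i),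
      ∃ l, Tendsto (fun n => f (φ n) ω) atTop (𝓝 l) := by
  choose M hM using fun i => (ha i).exists_bound hZpos hZint x
  choose c hc hae using fun i n => hM i (f n) (hfm n) (hf0 n) (hfi n) (hfx n)
  obtain ⟨l, -, φ, hφ, hl⟩ := (isCompact_univ_pi fun i => isCompact_Icc (a := (0 : ℝ))
    (b := M i)).tendsto_subseq (x := fun n i => c i n) fun n i _ => hc i n
  refine ⟨φ, hφ, (ae_restrict_iUnion_iff _ _).2 fun i => ?_⟩
  filter_upwards [ae_all_iff.2 (hae i)] with ω hω
  refine ⟨l i, ?_⟩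
  simp only [hω]
  exact (tendsto_pi_nhds.1 hl) i

lemma exists_nonneg_limit {f : ℕ → Ω → ℝ} (hfm : ∀ n, Measurable (f n))
    (hf0 : ∀ n ω, 0 ≤ f n ω) (h : ∀ᵐ ω ∂μ, ∃ l, Tendsto (fun n => f n ω) atTop (𝓝 l)) :
    ∃ g : Ω → ℝ, Measurable g ∧ (∀ ω, 0 ≤ g ω) ∧
      ∀ᵐ ω ∂μ, Tendsto (fun n => f n ω) atTop (𝓝 (g ω)) := by
  obtain ⟨g, hgm, hg⟩ := measurable_limit_of_tendsto_metrizable_ae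
    (fun n => (hfm n).aemeasurable) h
  refine ⟨fun ω => max (g ω) 0, hgm.max measurable_const, fun ω => le_max_right _ _, ?_⟩
  filter_upwards [hg] with ω hω
  rwa [max_eq_left (ge_of_tendsto' hω fun n => hf0 n ω)]

/-- Payoffs whose costs tend to zero converge to zero along a subsequence. -/
lemma exists_subseq_zero (hZm : Measurable Z) (hZpos : ∀ ω, 0 < Z ω) {f : ℕ → Ω → ℝ}
    (hfm : ∀ n, Measurable (f n)) (hf0 : ∀ n ω, 0 ≤ f n ω)
    (hfi : ∀ n, Integrable (fun ω => Z ω * f n ω) μ)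
    (hlim : Tendsto (fun n => ∫ ω, Z ω * f n ω ∂μ) atTop (𝓝 0)) :
    ∃ φ : ℕ → ℕ, StrictMono φ ∧ ∀ᵐ ω ∂μ, Tendsto (fun n => f (φ n) ω) atTop (𝓝 0) := by
  have h1 : TendstoInMeasure μ (fun n ω => Z ω * f n ω) atTop (fun _ => (0 : ℝ)) := by
    refine tendstoInMeasure_of_tendsto_eLpNorm one_ne_zero
      (fun n => (hZm.mul (hfm n)).aestronglyMeasurable) aestronglyMeasurable_const ?_
    have h2 := ENNReal.tendsto_ofReal hlim
    rw [ENNReal.ofReal_zero] at h2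
    refine h2.congr fun n => ?_
    have h0 : ∀ ω, 0 ≤ Z ω * f n ω := fun ω => mul_nonneg (hZpos ω).le (hf0 n ω)
    rw [eLpNorm_one_eq_lintegral_enorm,
      ofReal_integral_eq_lintegral_ofReal (hfi n) (Eventually.of_forall h0)]
    refine lintegral_congr fun ω => ?_
    simp [Real.enorm_of_nonneg (h0 ω)]
  obtain ⟨φ, hφ, h⟩ := h1.exists_seq_tendsto_ae
  refine ⟨φ, hφ, ?_⟩
  filter_upwards [h] with ω hω
  have h2 := hω.const_mul (Z ω)⁻¹
  rw [mul_zero] at h2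
  exact h2.congr fun n => inv_mul_cancel_left₀ (hZpos ω).ne' _

/-- A sequence of admissible payoffs within the budget is dominated, in the limit, by one
admissible payoff within the budget. On the atoms it is a limit of the sequence; on the atomless
part it is a Lagrangian maximiser for the limiting share of the budget spent there. -/
lemma exists_dominating [IsFiniteMeasure μ] (hU : IsUtility U) (hZm : Measurable Z)
    (hZpos : ∀ ω, 0 < Z ω) (hZint : Integrable Z μ)
    (hc : ∀ y : ℝ, 0 < y → Integrable (fun ω => conj U (y * Z ω)) μ) {x s : ℝ}
    {f : ℕ → Ω → ℝ} (hf : ∀ n, Admissible μ U Z (f n)) (hfx : ∀ n, ∫ ω, Z ω * f n ω ∂μ ≤ x)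
    (hs : Tendsto (fun n => ∫ ω, (Uext U (f n ω)).toReal ∂μ) atTop (𝓝 s)) :
    ∃ g, Admissible μ U Z g ∧ ∫ ω, Z ω * g ω ∂μ ≤ x ∧
      s ≤ ∫ ω, (Uext U (g ω)).toReal ∂μ := by
  classical
  obtain ⟨a, ha, hA⟩ := exists_preAtoms μ
  have hSm : MeasurableSet (⋃ i, a i) := MeasurableSet.iUnion fun i => (ha i).1
  obtain ⟨φ, hφ, hatom⟩ := exists_subseq_atoms ha hZpos hZint (fun n => (hf n).meas)
    (fun n => (hf n).nonneg) (fun n => (hf n).cost) hfx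
  generalize (⋃ i, a i) = S at hA hSm hatom
  have hnn : ∀ n ω, 0 ≤ Z ω * f n ω := fun n ω => mul_nonneg (hZpos ω).le ((hf n).nonneg ω)
  obtain ⟨ξ, hξ, ψ, hψ, hψlim⟩ := (isCompact_Icc (a := (0 : ℝ)) (b := x)).tendsto_subseq
    (x := fun n => ∫ ω in Sᶜ, Z ω * f (φ n) ω ∂μ) fun n =>
      ⟨integral_nonneg fun ω => hnn _ ω, (setIntegral_le_integral (hf _).cost
        (Eventually.of_forall fun ω => hnn _ ω)).trans (hfx _)⟩
  -- After passing to this subsequence the payoffs converge on the atoms, and the budget shares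
  -- spent on the atomless part converge to `ξ`.
  have hθ : StrictMono (φ ∘ ψ) := hφ.comp hψ
  replace hatom : ∀ᵐ ω ∂μ.restrict S, ∃ l, Tendsto (fun n => f ((φ ∘ ψ) n) ω) atTop (𝓝 l) := by
    filter_upwards [hatom] with ω ⟨l, hl⟩ using ⟨l, hl.comp hψ.tendsto_atTop⟩
  replace hψlim : Tendsto (fun n => ∫ ω in Sᶜ, Z ω * f ((φ ∘ ψ) n) ω ∂μ) atTop (𝓝 ξ) := hψlim
  generalize φ ∘ ψ = θ at hθ hatom hψlim
  rcases hξ.1.eq_or_lt with h0 | hξ0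
  · rw [← h0] at hψlim
    obtain ⟨κ, hκ, hzero⟩ := exists_subseq_zero (μ := μ.restrict Sᶜ) hZm hZpos
      (fun n => (hf (θ n)).meas) (fun n => (hf (θ n)).nonneg)
      (fun n => (hf (θ n)).cost.restrict) hψlim
    have hall : ∀ᵐ ω ∂μ, ∃ l, Tendsto (fun n => f (θ (κ n)) ω) atTop (𝓝 l) := by
      refine ae_of_ae_restrict_of_ae_restrict_compl S ?_ ?_
      · filter_upwards [hatom] with ω ⟨l, hl⟩ using ⟨l, hl.comp hκ.tendsto_atTop⟩
      · filter_upwards [hzero] with ω hω using ⟨0, hω⟩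
    obtain ⟨g, hgm, hg0, hg⟩ := exists_nonneg_limit (fun n => (hf (θ (κ n))).meas)
      (fun n => (hf (θ (κ n))).nonneg) hall
    obtain ⟨h1, h2, h3, h4⟩ := finiteUtility_of_tendsto hU hZm hZpos hc
      (fun n => (hf (θ (κ n))).meas) (fun n => (hf (θ (κ n))).nonneg) hgm hg0
      (fun n => (hf (θ (κ n))).cost) (fun n => hfx (θ (κ n))) tendsto_const_nhds
      (fun n => (hf (θ (κ n))).util) (fun n => le_rfl)
      (hs.comp (hθ.comp hκ).tendsto_atTop) hg
    exact ⟨g, ⟨hgm, hg0, h1, h3⟩, h2, h4⟩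
  · have hμA : μ.restrict Sᶜ ≠ 0 := by
      intro hz
      rw [hz] at hψlim
      simp only [integral_zero_measure] at hψlim
      exact hξ0.ne (tendsto_nhds_unique tendsto_const_nhds hψlim)
    obtain ⟨h, y, hhm, hhmax, hhi, hhx, hhy, hhu⟩ := exists_multiplier hμA (hA.restrict hSm.compl)
      hU hZm hZpos hZint.restrict (fun y hy => (hc y hy).restrict) hξ0
    obtain ⟨g, hgm, hg0, hg⟩ := exists_nonneg_limit (fun n => (hf (θ n)).meas)
      (fun n => (hf (θ n)).nonneg) hatom
    -- The utility earned on the atomless part is at most that of `h`, up to `y` times the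
    -- difference of costs, which vanishes in the limit by complementary slackness.
    obtain ⟨h1, h2, h3, h4⟩ := finiteUtility_of_tendsto (μ := μ.restrict S) hU hZm hZpos
      (fun y hy => (hc y hy).restrict) (f := fun n => f (θ n))
      (b := fun n => x - ∫ ω in Sᶜ, Z ω * f (θ n) ω ∂μ) (b₀ := x - ξ)
      (r := fun n => ∫ ω, (Uext U (f (θ n) ω)).toReal ∂μ -
        (∫ ω in Sᶜ, (Uext U (h ω)).toReal ∂μ +
          y * (∫ ω in Sᶜ, Z ω * f (θ n) ω ∂μ - ∫ ω in Sᶜ, Z ω * h ω ∂μ)))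
      (r₀ := s - (∫ ω in Sᶜ, (Uext U (h ω)).toReal ∂μ + y * (ξ - ∫ ω in Sᶜ, Z ω * h ω ∂μ)))
      (fun n => (hf (θ n)).meas) (fun n => (hf (θ n)).nonneg) hgm hg0
      (fun n => (hf (θ n)).cost.restrict)
      (fun n => by
        have := integral_add_compl hSm (hf (θ n)).cost
        linarith [hfx (θ n)])
      (hψlim.const_sub x) (fun n => ((hf (θ n)).restrict S).util)
      (fun n => by
        have h5 := integral_add_compl hSm (hf (θ n)).util.2
        have h6 := ((hf (θ n)).restrict Sᶜ)
        have h7 := integral_le_of_isArgMax hhmax hhi hhu h6.nonneg h6.cost h6.util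
        linarith)
      ((hs.comp hθ.tendsto_atTop).sub (((hψlim.sub_const _).const_mul y).const_add _)) hg
    obtain ⟨hadm, hcost, hutil⟩ := Admissible.piecewise hSm
      (⟨hgm, hg0, h1, h3⟩ : Admissible (μ.restrict S) U Z g)
      (⟨hhm, fun ω => (hhmax ω).1, hhi, hhu⟩ : Admissible (μ.restrict Sᶜ) U Z h)
    refine ⟨_, hadm, ?_, ?_⟩
    · rw [hcost]
      linarith
    · rw [hutil]
      linarith [mul_sub y ξ (∫ ω in Sᶜ, Z ω * h ω ∂μ)]

/-- A payoff in the budget set of maximal integral among the admissible ones is an optimiser. -/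
theorem exists_mem_valueFn_eq [IsProbabilityMeasure μ] (hZm : Measurable Z)
    (hZpos : ∀ ω, 0 < Z ω) (hZint : Integrable Z μ) (hZ1 : ∫ ω, Z ω ∂μ = 1) (hU : IsUtility U)
    (hV : ∀ y : ℝ, 0 < y → eexp μ (fun ω => ((conj U (y * Z ω) : ℝ) : EReal)) < ⊤)
    {x : ℝ} (hx : 0 < x) :
    ∃ f ∈ Cset μ Z x, valueFn μ Z (Uext U) x = eexp μ (fun ω => Uext U (f ω)) := by
  have hc : ∀ y : ℝ, 0 < y → Integrable (fun ω => conj U (y * Z ω)) μ := fun y hy =>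
    integrable_conj hU hZm hZpos hZint hV hy
  let R : Set ℝ := {r | ∃ f, Admissible μ U Z f ∧ ∫ ω, Z ω * f ω ∂μ ≤ x ∧
    ∫ ω, (Uext U (f ω)).toReal ∂μ = r}
  have hR : R.Nonempty := by
    refine ⟨_, fun _ => x, ⟨measurable_const, fun _ => hx.le, hZint.mul_const x,
      Eventually.of_forall fun ω => ?_, integrable_const _⟩, ?_, rfl⟩
    · rw [Uext_pos U hx]
      exact EReal.coe_ne_bot _
    · rw [integral_mul_const, hZ1, one_mul]
  have hRb : BddAbove R := by
    refine ⟨∫ ω, conj U (1 * Z ω) ∂μ + 1 * x, ?_⟩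
    rintro _ ⟨f, hf, hfx, rfl⟩
    have := integral_le_of_finite hU hZpos one_pos hf.nonneg hf.cost (hc 1 one_pos) hf.util
    linarith
  obtain ⟨r, -, hrlim, hrR⟩ := exists_seq_tendsto_sSup hR hRb
  choose f hf hfx hfr using hrR
  obtain ⟨g, hg, hgx, hgs⟩ := exists_dominating hU hZm hZpos hZint hc hf hfx
    (hrlim.congr fun n => (hfr n).symm)
  have hgC : g ∈ Cset μ Z x :=
    (mem_Cset_iff hZm hZpos hx.le).2 ⟨hg.meas, hg.nonneg, hg.cost, hgx⟩
  refine ⟨g, hgC, le_antisymm (iSup₂_le fun k hk => ?_)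
    (le_iSup₂ (f := fun (k : Ω → ℝ) (_ : k ∈ Cset μ Z x) => eexp μ fun ω => Uext U (k ω)) g hgC)⟩
  by_cases hbot : eexp μ (fun ω => Uext U (k ω)) = ⊥
  · rw [hbot]
    exact bot_le
  obtain ⟨hkm, hk0, hki, hkx⟩ := (mem_Cset_iff hZm hZpos hx.le).1 hk
  have hku : HasFiniteUtility μ U k := by
    refine hasFiniteUtility_of_eexp_ne_bot hU hkm ((hc 1 one_pos).add hki) (fun ω => ?_) hbot
    by_cases hω : Uext U (k ω) = ⊥
    · exact Or.inr hω
    · left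
      have := le_conj_of_le hU (mul_pos one_pos (hZpos ω)) (hk0 ω) (coe_toReal_Uext hω).le
      simpa [mul_comm, one_mul] using this
  rw [hku.eexp_eq, hg.util.eexp_eq]
  exact_mod_cast (le_csSup hRb ⟨k, ⟨hkm, hk0, hki, hku⟩, hkx, rfl⟩).trans hgs

end Existence

end NonconcaveUtility

/-- Under the dual integrability assumption, for every initial capital `x₀ > 0` the
non-concave utility maximization problem admits an optimizer `f̂ ∈ C(x₀)`. -/
theorem exists_optimizer
    {Ω : Type*} [MeasurableSpace Ω] (μ : MeasureTheory.Measure Ω)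
    [MeasureTheory.IsProbabilityMeasure μ]
    (Z : Ω → ℝ) (hZmeas : Measurable Z) (hZpos : ∀ ω, 0 < Z ω)
    (hZint : MeasureTheory.Integrable Z μ) (hZexp : ∫ ω, Z ω ∂μ = 1)
    (U : ℝ → ℝ) (hU : IsUtility U)
    (hV : ∀ y : ℝ, 0 < y → eexp μ (fun ω => ((conj U (y * Z ω) : ℝ) : EReal)) < ⊤) :
    ∀ x₀ : ℝ, 0 < x₀ → ∃ f ∈ Cset μ Z x₀,
      valueFn μ Z (Uext U) x₀ = eexp μ (fun ω => Uext U (f ω)) := by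
  intro x₀ hx₀
  exact NonconcaveUtility.exists_mem_valueFn_eq hZmeas hZpos hZint hZexp hU hV hx₀
end
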